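/- arXiv:1404.2192 — 3 statements merged into one kernel-verified Lean document; each statement's English description precedes it below -/
import Mathlib

section
/- Let n₁ be a nonzero integer and let f(y) = (32π·σ₂(|n₁|)²/(315·|n₁|³)) · ∑_{i,j ∈ {0,1}} r^{ij}(π|n₁|y)·K_i(2π|n₁|y)·K_j(2π|n₁|y), where r⁰⁰(z) = z·(−512z⁴ + 48z² − 15), r⁰¹(z) = r¹⁰(z) = −(128z⁴ + 12z² + 15), and r¹¹(z) = (512z⁶ + 16z⁴ + 33z² − 15)/z, and set F(y) = f(y) + 8·σ₂(|n₁|)²/(21·n₁⁶·π²·y³). Then y·( y²·e^{4π|n₁|y}·( F(y) − 8·σ₂(|n₁|)²/(21·π²·n₁⁶·y³) ) + σ₂(|n₁|)²/|n₁|⁵ ) remains bounded as y → ∞; equivalently, F(y) = 8·σ₂(|n₁|)²/(21·π²·n₁⁶·y³) − e^{−4π|n₁|y}·( σ₂(|n₁|)²/(|n₁|⁵·y²) + O(y^{−3}) ) as y → ∞. -/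
open Real

/-- Modified Bessel function `K₀`. -/
noncomputable def K0 (x : ℝ) : ℝ := ∫ t in Set.Ioi (0 : ℝ), Real.exp (-x * Real.cosh t)

/-- Modified Bessel function `K₁`. -/
noncomputable def K1 (x : ℝ) : ℝ :=
  ∫ t in Set.Ioi (0 : ℝ), Real.exp (-x * Real.cosh t) * Real.cosh t

/-- Divisor sum `σ₂(m) = ∑_{d ∣ m} d²`. -/
def sigma2 (m : ℕ) : ℕ := ∑ d ∈ m.divisors, d ^ 2

/-- The coefficient `r⁰⁰`. -/
noncomputable def r00 (z : ℝ) : ℝ := z * (-512 * z ^ 4 + 48 * z ^ 2 - 15)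

/-- The coefficient `r⁰¹ = r¹⁰`. -/
noncomputable def r01 (z : ℝ) : ℝ := -(128 * z ^ 4 + 12 * z ^ 2 + 15)

/-- The coefficient `r¹¹`. -/
noncomputable def r11 (z : ℝ) : ℝ := (512 * z ^ 6 + 16 * z ^ 4 + 33 * z ^ 2 - 15) / z

/-- The particular solution `f̂^P_{n₁,-n₁}`. -/
noncomputable def fPdiag (n₁ : ℤ) (y : ℝ) : ℝ :=
  32 * π * (sigma2 n₁.natAbs : ℝ) ^ 2 / (315 * |(n₁ : ℝ)| ^ 3) *
    (r00 (π * |(n₁ : ℝ)| * y) * K0 (2 * π * |(n₁ : ℝ)| * y) * K0 (2 * π * |(n₁ : ℝ)| * y) +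
      r01 (π * |(n₁ : ℝ)| * y) * K0 (2 * π * |(n₁ : ℝ)| * y) * K1 (2 * π * |(n₁ : ℝ)| * y) +
      r01 (π * |(n₁ : ℝ)| * y) * K1 (2 * π * |(n₁ : ℝ)| * y) * K0 (2 * π * |(n₁ : ℝ)| * y) +
      r11 (π * |(n₁ : ℝ)| * y) * K1 (2 * π * |(n₁ : ℝ)| * y) * K1 (2 * π * |(n₁ : ℝ)| * y))


/-- The complete mode `f̂_{n₁,-n₁}`. -/
noncomputable def fDiag (n₁ : ℤ) (y : ℝ) : ℝ :=
  fPdiag n₁ y + 8 * (sigma2 n₁.natAbs : ℝ) ^ 2 / (21 * (n₁ : ℝ) ^ 6 * π ^ 2 * y ^ 3)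

/-!
In the variable `x = 2π|n₁|y` the mode is, up to a constant, a quadratic form `Q` in `K₀` and `K₁`
whose leading terms cancel to six orders at infinity, so that inserting the asymptotic series of
`K₀` and `K₁` would require seven terms of each. The cancellation is instead contained in
two exact identities,
`(x⁻⁴ Q)' = (105/2) x⁻⁴ (K₂² - K₁²)` and `(x⁴ (K₂² - K₁²))' = -6 x³ K₁²`.
A function tending to zero inherits the asymptotics `xᵐ e^{-ax}` of its derivative, so integrating
twice from infinity reduces everything to the leading term `K₁² ~ (π / 2x) e^{-2x}`.
-/

open Asymptotics Filter MeasureTheory Set Topology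

section DerivativeAtTop

variable {f f' g g' : ℝ → ℝ}

lemma eventually_nonpos_of_hasDerivAt_nonneg_of_tendsto_zero
    (hf : ∀ᶠ x in atTop, HasDerivAt f (f' x) x) (hf' : ∀ᶠ x in atTop, 0 ≤ f' x)
    (hlim : Tendsto f atTop (𝓝 0)) : ∀ᶠ x in atTop, f x ≤ 0 := by
  obtain ⟨a, ha⟩ := eventually_atTop.1 (hf.and hf')
  have hmono : MonotoneOn f (Ici a) :=
    monotoneOn_of_hasDerivWithinAt_nonneg (convex_Ici a)
      (fun x hx ↦ (ha x hx).1.continuousAt.continuousWithinAt)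
      (fun x hx ↦ (ha x (interior_subset hx)).1.hasDerivWithinAt)
      (fun x hx ↦ (ha x (interior_subset hx)).2)
  filter_upwards [eventually_ge_atTop a] with x hx
  refine ge_of_tendsto hlim ?_
  filter_upwards [eventually_ge_atTop x] with y hy
  exact hmono hx (hx.trans hy) hy

lemma isBigO_of_hasDerivAt_isBigO_of_tendsto_zero
    (hf : ∀ᶠ x in atTop, HasDerivAt f (f' x) x) (hg : ∀ᶠ x in atTop, HasDerivAt g (g' x) x)
    (hg' : ∀ᶠ x in atTop, g' x ≤ 0) (hf0 : Tendsto f atTop (𝓝 0)) (hg0 : Tendsto g atTop (𝓝 0))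
    (h : f' =O[atTop] g') : f =O[atTop] g := by
  obtain ⟨C, hC⟩ := h.bound
  have hbound : ∀ᶠ x in atTop, |f' x| ≤ -(C * g' x) := by
    filter_upwards [hC, hg'] with x hx hgx
    simpa [abs_of_nonpos hgx] using hx
  have hle : ∀ᶠ x in atTop, f x - C * g x ≤ 0 := by
    refine eventually_nonpos_of_hasDerivAt_nonneg_of_tendsto_zero
      (f' := fun x ↦ f' x - C * g' x) ?_ ?_ (by simpa using hf0.sub (hg0.const_mul C))
    · filter_upwards [hf, hg] with x hfx hgx using hfx.sub (hgx.const_mul C)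
    · filter_upwards [hbound] with x hx
      linarith [(abs_le.1 hx).1]
  have hge : ∀ᶠ x in atTop, -f x - C * g x ≤ 0 := by
    refine eventually_nonpos_of_hasDerivAt_nonneg_of_tendsto_zero
      (f' := fun x ↦ -f' x - C * g' x) ?_ ?_ (by simpa using hf0.neg.sub (hg0.const_mul C))
    · filter_upwards [hf, hg] with x hfx hgx using hfx.neg.sub (hgx.const_mul C)
    · filter_upwards [hbound] with x hx
      linarith [(abs_le.1 hx).2]
  refine IsBigO.of_bound |C| ?_
  filter_upwards [hle, hge] with x hlex hgex
  rw [Real.norm_eq_abs, Real.norm_eq_abs, ← abs_mul]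
  exact (abs_le.2 ⟨by linarith, by linarith⟩ : |f x| ≤ C * g x).trans (le_abs_self _)

end DerivativeAtTop

section ZpowMulExp

variable {f f' : ℝ → ℝ} {a : ℝ}

lemma superpolynomialDecay_exp_neg_mul (ha : 0 < a) :
    SuperpolynomialDecay atTop id fun x : ℝ ↦ exp (-a * x) := fun n ↦ by
  simpa [neg_mul, Real.exp_neg, div_eq_mul_inv] using
    (isLittleO_pow_exp_pos_mul_atTop n ha).tendsto_div_nhds_zero

lemma tendsto_zpow_mul_exp_neg_mul_atTop (m : ℤ) (ha : 0 < a) :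
    Tendsto (fun x : ℝ ↦ x ^ m * exp (-a * x)) atTop (𝓝 0) :=
  (superpolynomialDecay_iff_zpow_tendsto_zero _ tendsto_id).1
    (superpolynomialDecay_exp_neg_mul ha) m

lemma hasDerivAt_zpow_mul_exp_neg_mul (m : ℤ) (a : ℝ) {x : ℝ} (hx : x ≠ 0) :
    HasDerivAt (fun x : ℝ ↦ x ^ m * exp (-a * x))
      (m * (x ^ (m - 1) * exp (-a * x)) - a * (x ^ m * exp (-a * x))) x := by
  refine ((hasDerivAt_zpow m x (.inl hx)).mul
    ((hasDerivAt_id x).const_mul (-a)).exp).congr_deriv ?_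
  simp only [id]
  ring

lemma isLittleO_zpow_sub_one_mul_exp (m : ℤ) (a : ℝ) :
    (fun x : ℝ ↦ x ^ (m - 1) * exp (-a * x)) =o[atTop] fun x ↦ x ^ m * exp (-a * x) := by
  have h : (fun x : ℝ ↦ x⁻¹) =o[atTop] fun _ ↦ (1 : ℝ) :=
    (isLittleO_one_iff ℝ).2 tendsto_inv_atTop_zero
  refine (h.mul_isBigO (isBigO_refl (fun x : ℝ ↦ x ^ m * exp (-a * x)) atTop)).congr' ?_ ?_
  · filter_upwards [eventually_ne_atTop 0] with x hx
    rw [zpow_sub_one₀ hx]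
    ring
  · simp

lemma isBigO_of_hasDerivAt_isBigO_zpow_mul_exp (m : ℤ) (ha : 0 < a)
    (hf : ∀ᶠ x in atTop, HasDerivAt f (f' x) x) (hf0 : Tendsto f atTop (𝓝 0))
    (h : f' =O[atTop] fun x ↦ x ^ m * exp (-a * x)) :
    f =O[atTop] fun x ↦ x ^ m * exp (-a * x) := by
  have hequiv : (fun x : ℝ ↦ m * (x ^ (m - 1) * exp (-a * x)) - a * (x ^ m * exp (-a * x)))
      ~[atTop] fun x ↦ -a * (x ^ m * exp (-a * x)) := by
    refine (((isLittleO_zpow_sub_one_mul_exp m a).const_mul_left (m : ℝ)).const_mul_right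
      (neg_ne_zero.2 ha.ne')).congr_left fun x ↦ ?_
    simp only [Pi.sub_apply]
    ring
  refine isBigO_of_hasDerivAt_isBigO_of_tendsto_zero hf ?_ ?_ hf0
    (tendsto_zpow_mul_exp_neg_mul_atTop m ha)
    ((h.const_mul_right (neg_ne_zero.2 ha.ne')).trans hequiv.isBigO_symm)
  · filter_upwards [eventually_ne_atTop 0] with x hx using hasDerivAt_zpow_mul_exp_neg_mul m a hx
  · filter_upwards [eventually_gt_atTop 0, eventually_ge_atTop (m / a)] with x hx hmx
    rw [div_le_iff₀ ha] at hmx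
    rw [zpow_sub_one₀ hx.ne', show (m : ℝ) * (x ^ m * x⁻¹ * exp (-a * x)) -
      a * (x ^ m * exp (-a * x)) = x ^ m * exp (-a * x) * x⁻¹ * (m - x * a) by field_simp]
    exact mul_nonpos_of_nonneg_of_nonpos (by positivity) (by linarith)

end ZpowMulExp

section HasExpAsymptotic

/-- The asymptotic relation `f(x) = (c + O(1/x)) xᵐ e^{-ax}` as `x → ∞`. The coefficient `c` may
vanish. -/
def HasExpAsymptotic (f : ℝ → ℝ) (a : ℝ) (m : ℤ) (c : ℝ) : Prop :=
  (fun x ↦ f x - c * (x ^ m * exp (-a * x))) =O[atTop] fun x ↦ x ^ (m - 1) * exp (-a * x)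

namespace HasExpAsymptotic

variable {f f' : ℝ → ℝ} {a c : ℝ} {m : ℤ}

lemma const_mul (h : HasExpAsymptotic f a m c) (b : ℝ) :
    HasExpAsymptotic (fun x ↦ b * f x) a m (b * c) :=
  (h.const_mul_left b).congr_left fun x ↦ by ring

lemma zpow_mul (h : HasExpAsymptotic f a m c) (k : ℤ) :
    HasExpAsymptotic (fun x ↦ x ^ k * f x) a (k + m) c := by
  refine ((isBigO_refl (fun x : ℝ ↦ x ^ k) atTop).mul h).congr' ?_ ?_
  · filter_upwards [eventually_ne_atTop 0] with x hx
    rw [zpow_add₀ hx]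
    ring
  · filter_upwards [eventually_ne_atTop 0] with x hx
    rw [add_sub_assoc, zpow_add₀ hx, mul_assoc]

lemma zpow_mul_iff (k : ℤ) :
    HasExpAsymptotic (fun x ↦ x ^ k * f x) a (k + m) c ↔ HasExpAsymptotic f a m c := by
  refine ⟨fun h ↦ ?_, fun h ↦ h.zpow_mul k⟩
  have h' := h.zpow_mul (-k)
  rw [neg_add_cancel_left] at h'
  refine IsBigO.congr' h' ?_ .rfl
  filter_upwards [eventually_ne_atTop 0] with x hx
  rw [← mul_assoc, ← zpow_add₀ hx, neg_add_cancel, zpow_zero, one_mul]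

lemma of_hasDerivAt (ha : 0 < a) (hf : ∀ᶠ x in atTop, HasDerivAt f (f' x) x)
    (hf0 : Tendsto f atTop (𝓝 0)) (h : HasExpAsymptotic f' a m c) :
    HasExpAsymptotic f a m (-c / a) := by
  refine isBigO_of_hasDerivAt_isBigO_zpow_mul_exp (m - 1) ha (f' := fun x ↦ f' x -
    c * (x ^ m * exp (-a * x)) + c / a * m * (x ^ (m - 1) * exp (-a * x))) ?_ ?_ ?_
  · filter_upwards [hf, eventually_ne_atTop 0] with x hfx hx
    refine (hfx.sub ((hasDerivAt_zpow_mul_exp_neg_mul m a hx).const_mul (-c / a))).congr_deriv ?_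
    field_simp
    ring
  · simpa using hf0.sub ((tendsto_zpow_mul_exp_neg_mul_atTop m ha).const_mul (-c / a))
  · exact h.add ((isBigO_refl _ _).const_mul_left _)

lemma isBigO_one (h : HasExpAsymptotic f a m c) :
    (fun x ↦ x * (x ^ (-m) * exp (a * x) * f x - c)) =O[atTop] fun _ ↦ (1 : ℝ) := by
  refine ((isBigO_refl (fun x : ℝ ↦ x ^ (1 - m) * exp (a * x)) atTop).mul h).congr' ?_ ?_
  · filter_upwards [eventually_ne_atTop 0] with x hx
    rw [sub_eq_add_neg 1 m, zpow_add₀ hx, zpow_neg, zpow_one, neg_mul, Real.exp_neg]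
    field_simp
  · filter_upwards [eventually_ne_atTop 0] with x hx
    rw [← neg_sub m 1, zpow_neg, neg_mul, Real.exp_neg]
    field_simp

end HasExpAsymptotic

end HasExpAsymptotic
section CoshMoment

lemma self_le_cosh (t : ℝ) : t ≤ cosh t := by
  rcases le_total 0 t with ht | ht
  · exact (self_le_sinh_iff.2 ht).trans (sinh_lt_cosh t).le
  · exact ht.trans (cosh_pos t).le

/-- The integral `∫₀^∞ e^{-x cosh t} coshᵏ t dt`, of which the Bessel functions `K₀` and `K₁` are
the cases `k = 0` and `k = 1`. In this family differentiation under the integral sign is the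
shift `k ↦ k + 1`, up to sign. -/
noncomputable def coshMoment (k : ℕ) (x : ℝ) : ℝ :=
  ∫ t in Ioi (0 : ℝ), exp (-x * cosh t) * cosh t ^ k

lemma coshMoment_zero (x : ℝ) : coshMoment 0 x = K0 x := by
  simp only [coshMoment, pow_zero, mul_one, K0]

lemma coshMoment_one (x : ℝ) : coshMoment 1 x = K1 x := by
  simp only [coshMoment, pow_one, K1]

variable {x : ℝ}

lemma exp_neg_mul_cosh_mul_cosh_pow_isBigO (k : ℕ) (hx : 0 < x) :
    (fun t ↦ exp (-x * cosh t) * cosh t ^ k) =O[atTop] fun t ↦ exp (-(x / 2) * t) := by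
  have hcosh : Tendsto cosh atTop atTop := tendsto_atTop_mono self_le_cosh tendsto_id
  have hpow : (fun t ↦ cosh t ^ k) =O[atTop] fun t ↦ exp (x / 2 * cosh t) :=
    (isLittleO_pow_exp_pos_mul_atTop k (half_pos hx)).isBigO.comp_tendsto hcosh
  refine ((isBigO_refl (fun t ↦ exp (-x * cosh t)) atTop).mul hpow).trans
    (IsBigO.of_norm_le fun t ↦ ?_)
  rw [← Real.exp_add, Real.norm_of_nonneg (exp_pos _).le, Real.exp_le_exp]
  nlinarith [self_le_cosh t]

lemma continuous_exp_neg_mul_cosh_mul_cosh_pow (k : ℕ) (x : ℝ) :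
    Continuous fun t ↦ exp (-x * cosh t) * cosh t ^ k := by
  fun_prop

lemma integrableOn_exp_neg_mul_cosh_mul_cosh_pow (k : ℕ) (hx : 0 < x) :
    IntegrableOn (fun t ↦ exp (-x * cosh t) * cosh t ^ k) (Ioi 0) :=
  integrable_of_isBigO_exp_neg (half_pos hx)
    (continuous_exp_neg_mul_cosh_mul_cosh_pow k x).continuousOn
    (exp_neg_mul_cosh_mul_cosh_pow_isBigO k hx)

lemma hasDerivAt_coshMoment (k : ℕ) (hx : 0 < x) :
    HasDerivAt (coshMoment k) (-coshMoment (k + 1) x) x := by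
  have h := hasDerivAt_integral_of_dominated_loc_of_deriv_le (μ := volume.restrict (Ioi 0))
    (F := fun y t ↦ exp (-y * cosh t) * cosh t ^ k)
    (F' := fun y t ↦ -(exp (-y * cosh t) * cosh t ^ (k + 1)))
    (bound := fun t ↦ exp (-(x / 2) * cosh t) * cosh t ^ (k + 1))
    (Ioi_mem_nhds (half_lt_self hx))
    (.of_forall fun y ↦
      (continuous_exp_neg_mul_cosh_mul_cosh_pow k y).aestronglyMeasurable)
    (integrableOn_exp_neg_mul_cosh_mul_cosh_pow k hx)
    (continuous_exp_neg_mul_cosh_mul_cosh_pow (k + 1) x).neg.aestronglyMeasurable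
    (.of_forall fun t y hy ↦ ?_)
    (integrableOn_exp_neg_mul_cosh_mul_cosh_pow (k + 1) (half_pos hx))
    (.of_forall fun t y _ ↦ ?_)
  · exact h.2.congr_deriv (integral_neg _)
  · rw [norm_neg, Real.norm_of_nonneg (by positivity)]
    gcongr
    exact (mem_Ioi.1 hy).le
  · refine (((hasDerivAt_neg y).mul_const (cosh t)).exp.mul_const (cosh t ^ k)).congr_deriv ?_
    ring

/-- Integration by parts: the boundary terms of `sinh t * e^{-x cosh t}` vanish. -/
lemma mul_coshMoment_two (hx : 0 < x) :
    x * coshMoment 2 x = x * coshMoment 0 x + coshMoment 1 x := by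
  have hint (k : ℕ) := integrableOn_exp_neg_mul_cosh_mul_cosh_pow k hx
  have hderiv (t : ℝ) : HasDerivAt (fun t ↦ sinh t * exp (-x * cosh t))
      (exp (-x * cosh t) * cosh t ^ 1 -
        x * (exp (-x * cosh t) * cosh t ^ 2 - exp (-x * cosh t) * cosh t ^ 0)) t := by
    refine ((hasDerivAt_sinh t).mul ((hasDerivAt_cosh t).const_mul (-x)).exp).congr_deriv ?_
    linear_combination (-x * exp (-x * cosh t)) * sinh_sq t
  have hlim : Tendsto (fun t ↦ sinh t * exp (-x * cosh t)) atTop (𝓝 0) := by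
    refine IsBigO.trans_tendsto ((IsBigO.of_norm_le fun t ↦ ?_).trans
      (exp_neg_mul_cosh_mul_cosh_pow_isBigO 1 hx))
      (by simpa using tendsto_zpow_mul_exp_neg_mul_atTop 0 (half_pos hx))
    rw [norm_mul, Real.norm_eq_abs, Real.norm_of_nonneg (exp_pos _).le, pow_one, mul_comm]
    gcongr
    exact abs_le.2 ⟨by linarith [sinh_lt_cosh (-t), sinh_neg t, cosh_neg t],
      (sinh_lt_cosh t).le⟩
  have hsub : IntegrableOn
      (fun t ↦ exp (-x * cosh t) * cosh t ^ 2 - exp (-x * cosh t) * cosh t ^ 0) (Ioi 0) :=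
    (hint 2).sub (hint 0)
  have h := integral_Ioi_of_hasDerivAt_of_tendsto
    (hderiv 0).continuousAt.continuousWithinAt (fun t _ ↦ hderiv t)
    ((hint 1).sub (hsub.const_mul x)) hlim
  rw [integral_sub (hint 1) (hsub.const_mul x), integral_const_mul,
    integral_sub (hint 2) (hint 0), sinh_zero, zero_mul, sub_zero] at h
  simp only [coshMoment]
  linarith

lemma coshMoment_nonneg (k : ℕ) (x : ℝ) : 0 ≤ coshMoment k x :=
  integral_nonneg fun t ↦ mul_nonneg (exp_pos _).le (pow_nonneg (cosh_pos t).le k)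

lemma coshMoment_le_exp_mul_coshMoment (k : ℕ) {y : ℝ} (hy : 0 < y) (hyx : y ≤ x) :
    coshMoment k x ≤ exp (y - x) * coshMoment k y := by
  rw [coshMoment, coshMoment, ← integral_const_mul]
  refine integral_mono (integrableOn_exp_neg_mul_cosh_mul_cosh_pow k (hy.trans_le hyx))
    ((integrableOn_exp_neg_mul_cosh_mul_cosh_pow k hy).const_mul _) fun t ↦ ?_
  rw [← mul_assoc, ← Real.exp_add]
  refine mul_le_mul_of_nonneg_right (Real.exp_le_exp.2 ?_) (pow_nonneg (cosh_pos t).le k)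
  nlinarith [one_le_cosh t]

lemma superpolynomialDecay_coshMoment (k : ℕ) :
    SuperpolynomialDecay atTop id (coshMoment k) := by
  refine ((superpolynomialDecay_exp_neg_mul one_pos).const_mul
    (exp 1 * coshMoment k 1)).trans_eventually_abs_le ?_
  filter_upwards [eventually_ge_atTop 1] with x hx
  simp only [Function.comp_apply]
  rw [abs_of_nonneg (coshMoment_nonneg k x)]
  refine (coshMoment_le_exp_mul_coshMoment k one_pos hx).trans (le_of_eq_of_le ?_ (le_abs_self _))
  rw [sub_eq_add_neg, Real.exp_add, neg_one_mul]
  ring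

end CoshMoment

section BesselK

variable {x : ℝ}

lemma hasDerivAt_K0 (hx : 0 < x) : HasDerivAt K0 (-K1 x) x := by
  have h := hasDerivAt_coshMoment 0 hx
  rwa [coshMoment_one, funext coshMoment_zero] at h

lemma hasDerivAt_K1 (hx : 0 < x) : HasDerivAt K1 (-K0 x - K1 x / x) x := by
  have h := hasDerivAt_coshMoment 1 hx
  have hrec := mul_coshMoment_two hx
  rw [funext coshMoment_one] at h
  rw [coshMoment_zero, coshMoment_one] at hrec
  refine h.congr_deriv ?_
  field_simp
  linarith

lemma superpolynomialDecay_K0 : SuperpolynomialDecay atTop id K0 :=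
  (superpolynomialDecay_coshMoment 0).congr coshMoment_zero

lemma superpolynomialDecay_K1 : SuperpolynomialDecay atTop id K1 :=
  (superpolynomialDecay_coshMoment 1).congr coshMoment_one

end BesselK

section K1Asymptotics

lemma integral_sq_mul_gaussian_Ioi {b : ℝ} (hb : 0 < b) :
    ∫ u in Ioi (0 : ℝ), u ^ 2 * exp (-b * u ^ 2) = √(π / b) / (4 * b) := by
  have h := integral_rpow_mul_exp_neg_mul_rpow (p := 2) (q := 2) two_pos (by norm_num) hb
  have hGamma : Gamma ((2 + 1) / 2) = √π / 2 := by
    rw [show (2 + 1 : ℝ) / 2 = 1 / 2 + 1 by norm_num, Gamma_add_one (by norm_num),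
      Gamma_one_half_eq]
    ring
  have hpow : b ^ (-(2 + 1) / 2 : ℝ) = (b * √b)⁻¹ := by
    rw [show (-(2 + 1) / 2 : ℝ) = -(1 + 1 / 2) by norm_num, rpow_neg hb.le, rpow_add hb, rpow_one,
      sqrt_eq_rpow]
  simp only [rpow_two, hGamma, hpow] at h
  rw [h, Real.sqrt_div pi_pos.le]
  field_simp
  norm_num

lemma integrableOn_gaussian_Ioi {b : ℝ} (hb : 0 < b) :
    IntegrableOn (fun u : ℝ ↦ exp (-b * u ^ 2)) (Ioi 0) :=
  (integrable_exp_neg_mul_sq hb).integrableOn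

lemma integrableOn_sq_mul_gaussian_Ioi {b : ℝ} (hb : 0 < b) :
    IntegrableOn (fun u : ℝ ↦ u ^ 2 * exp (-b * u ^ 2)) (Ioi 0) := by
  simpa only [rpow_two] using
    integrableOn_rpow_mul_exp_neg_mul_sq hb (s := 2) (by norm_num)

lemma image_sinh_half_Ioi_zero : (fun t ↦ sinh (t / 2)) '' Ioi 0 = Ioi 0 := by
  ext u
  refine ⟨?_, fun hu ↦ ⟨2 * arsinh u, ?_, ?_⟩⟩
  · rintro ⟨t, ht, rfl⟩
    exact sinh_pos_iff.2 (half_pos ht)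
  · exact mul_pos two_pos (arsinh_pos_iff.2 hu)
  · simp

lemma integral_cosh_half_mul_comp_sinh_half (g : ℝ → ℝ) :
    ∫ t in Ioi (0 : ℝ), cosh (t / 2) * g (sinh (t / 2)) = 2 * ∫ u in Ioi (0 : ℝ), g u := by
  have hderiv (t : ℝ) : HasDerivAt (fun t ↦ sinh (t / 2)) (cosh (t / 2) / 2) t :=
    ((hasDerivAt_id t).div_const 2).sinh.congr_deriv (mul_one_div _ _)
  have hinj : InjOn (fun t ↦ sinh (t / 2)) (Ioi 0) := fun s _ t _ h ↦ by
    simpa using sinh_injective h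
  have h := integral_image_eq_integral_abs_deriv_smul measurableSet_Ioi
    (fun t _ ↦ (hderiv t).hasDerivWithinAt) hinj g
  rw [image_sinh_half_Ioi_zero] at h
  rw [h, ← integral_const_mul]
  refine integral_congr_ae (.of_forall fun t ↦ ?_)
  simp only [smul_eq_mul, abs_of_pos (half_pos (cosh_pos (t / 2)))]
  ring

/-- The substitution `u = sinh (t / 2)`, under which `cosh t = 1 + 2u²`. -/
lemma K1_eq_integral_gaussian (x : ℝ) :
    K1 x = 2 * exp (-x) *
      ∫ u in Ioi (0 : ℝ), exp (-(2 * x) * u ^ 2) * ((1 + 2 * u ^ 2) / √(1 + u ^ 2)) := by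
  rw [mul_right_comm, ← integral_cosh_half_mul_comp_sinh_half, mul_comm, ← integral_const_mul, K1]
  refine integral_congr_ae (.of_forall fun t ↦ ?_)
  have hcosh : cosh t = 1 + 2 * sinh (t / 2) ^ 2 := by
    have h := cosh_two_mul (t / 2)
    rw [mul_div_cancel₀ t two_ne_zero, cosh_sq] at h
    linarith
  have hpos := cosh_pos (t / 2)
  simp only [← cosh_sq', sqrt_sq hpos.le]
  rw [hcosh, show -x * (1 + 2 * sinh (t / 2) ^ 2) = -x + -(2 * x) * sinh (t / 2) ^ 2 by ring,
    Real.exp_add]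
  field_simp

lemma one_le_one_add_two_mul_sq_div_sqrt (u : ℝ) : 1 ≤ (1 + 2 * u ^ 2) / √(1 + u ^ 2) := by
  rw [one_le_div (by positivity), Real.sqrt_le_left (by positivity)]
  nlinarith [sq_nonneg u]

lemma one_add_two_mul_sq_div_sqrt_le (u : ℝ) :
    (1 + 2 * u ^ 2) / √(1 + u ^ 2) ≤ 1 + 3 / 2 * u ^ 2 := by
  rw [div_le_iff₀ (by positivity)]
  have hsq : √(1 + u ^ 2) ^ 2 = 1 + u ^ 2 := Real.sq_sqrt (by positivity)
  nlinarith [mul_nonneg (sq_nonneg (√(1 + u ^ 2) - 1)) (sqrt_nonneg (1 + u ^ 2))]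

lemma gaussian_mul_div_sqrt_le (b u : ℝ) :
    exp (-b * u ^ 2) * ((1 + 2 * u ^ 2) / √(1 + u ^ 2)) ≤
      exp (-b * u ^ 2) + 3 / 2 * (u ^ 2 * exp (-b * u ^ 2)) :=
  (mul_le_mul_of_nonneg_left (one_add_two_mul_sq_div_sqrt_le u) (exp_pos _).le).trans_eq (by ring)

variable {x : ℝ}

lemma integrableOn_gaussian_mul_div_sqrt (hx : 0 < x) :
    IntegrableOn (fun u : ℝ ↦ exp (-(2 * x) * u ^ 2) * ((1 + 2 * u ^ 2) / √(1 + u ^ 2)))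
      (Ioi 0) := by
  have hb : 0 < 2 * x := by positivity
  have hcont : Continuous fun u : ℝ ↦
      exp (-(2 * x) * u ^ 2) * ((1 + 2 * u ^ 2) / √(1 + u ^ 2)) := by
    have hne (u : ℝ) : √(1 + u ^ 2) ≠ 0 := by positivity
    fun_prop (disch := exact hne)
  refine ((integrableOn_gaussian_Ioi hb).add
    ((integrableOn_sq_mul_gaussian_Ioi hb).const_mul (3 / 2))).mono' hcont.aestronglyMeasurable
    (.of_forall fun u ↦ ?_)
  rw [Real.norm_of_nonneg (by positivity)]
  exact gaussian_mul_div_sqrt_le (2 * x) u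

lemma exp_neg_mul_sqrt_le_K1 (hx : 0 < x) : exp (-x) * √(π / (2 * x)) ≤ K1 x := by
  have h := integral_mono (integrableOn_gaussian_Ioi (by positivity : 0 < 2 * x))
    (integrableOn_gaussian_mul_div_sqrt hx) fun u ↦
      le_mul_of_one_le_right (exp_pos _).le (one_le_one_add_two_mul_sq_div_sqrt u)
  rw [integral_gaussian_Ioi] at h
  rw [K1_eq_integral_gaussian]
  linarith [mul_le_mul_of_nonneg_left h (exp_pos (-x)).le]

lemma K1_le_exp_neg_mul_sqrt (hx : 0 < x) :
    K1 x ≤ exp (-x) * √(π / (2 * x)) * (1 + 3 / (8 * x)) := by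
  have hb : 0 < 2 * x := by positivity
  have hsq := (integrableOn_sq_mul_gaussian_Ioi hb).const_mul (3 / 2)
  have h := integral_mono (integrableOn_gaussian_mul_div_sqrt hx)
    ((integrableOn_gaussian_Ioi hb).add hsq) (gaussian_mul_div_sqrt_le (2 * x))
  simp only [Pi.add_apply] at h
  rw [integral_add (integrableOn_gaussian_Ioi hb) hsq, integral_const_mul, integral_gaussian_Ioi,
    integral_sq_mul_gaussian_Ioi hb] at h
  rw [K1_eq_integral_gaussian]
  refine (mul_le_mul_of_nonneg_left h (by positivity)).trans_eq ?_
  field_simp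
  ring

lemma hasExpAsymptotic_K1_sq : HasExpAsymptotic (fun x ↦ K1 x ^ 2) 2 (-1) (π / 2) := by
  refine IsBigO.of_bound π ?_
  filter_upwards [eventually_ge_atTop 1] with x hx
  have hx0 : 0 < x := one_pos.trans_le hx
  have hsq : (exp (-x) * √(π / (2 * x))) ^ 2 = π / 2 * (x ^ (-1 : ℤ) * exp (-2 * x)) := by
    rw [mul_pow, Real.sq_sqrt (by positivity), ← Real.exp_nat_mul, zpow_neg_one]
    push_cast
    rw [show 2 * -x = -2 * x by ring]
    field_simp
  have hlower := pow_le_pow_left₀ (by positivity) (exp_neg_mul_sqrt_le_K1 hx0) 2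
  have hupper := pow_le_pow_left₀ (coshMoment_one x ▸ coshMoment_nonneg 1 x)
    (K1_le_exp_neg_mul_sqrt hx0) 2
  have hfactor : (1 + 3 / (8 * x)) ^ 2 ≤ 1 + 2 * x⁻¹ := by
    have : x⁻¹ ≤ 1 := inv_le_one_of_one_le₀ hx
    rw [show 3 / (8 * x) = 3 / 8 * x⁻¹ by field_simp]
    nlinarith [inv_pos.2 hx0]
  rw [mul_pow _ (1 + _), hsq] at hupper
  rw [hsq] at hlower
  rw [Real.norm_of_nonneg (sub_nonneg.2 hlower), Real.norm_of_nonneg (by positivity)]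
  calc K1 x ^ 2 - π / 2 * (x ^ (-1 : ℤ) * exp (-2 * x))
      ≤ π / 2 * (x ^ (-1 : ℤ) * exp (-2 * x)) * (1 + 2 * x⁻¹) -
          π / 2 * (x ^ (-1 : ℤ) * exp (-2 * x)) :=
        sub_le_sub_right (hupper.trans (by gcongr)) _
    _ = π * (x ^ (-1 - 1 : ℤ) * exp (-2 * x)) := by
        rw [zpow_sub_one₀ hx0.ne']
        ring

end K1Asymptotics

section BesselForm

/-- The modified Bessel function `K₂`, through the recurrence `x K₂ = x K₀ + 2 K₁`. -/
noncomputable def K2 (x : ℝ) : ℝ := K0 x + 2 * (x⁻¹ * K1 x)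

/-- The quadratic form `∑ rⁱʲ(x / 2) Kᵢ(x) Kⱼ(x)` in the Bessel functions which underlies `fPdiag`,
in the variable `x = 2π|n₁|y`. -/
noncomputable def besselForm (x : ℝ) : ℝ :=
  r00 (x / 2) * K0 x ^ 2 + 2 * r01 (x / 2) * (K0 x * K1 x) + r11 (x / 2) * K1 x ^ 2

variable {x : ℝ}

lemma hasDerivAt_K2 (hx : 0 < x) : HasDerivAt K2 (-K1 x - 2 * (x⁻¹ * K2 x)) x := by
  refine ((hasDerivAt_K0 hx).add
    (((hasDerivAt_inv hx.ne').mul (hasDerivAt_K1 hx)).const_mul 2)).congr_deriv ?_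
  rw [K2]
  field_simp
  ring

lemma superpolynomialDecay_K2 : SuperpolynomialDecay atTop id K2 :=
  superpolynomialDecay_K0.add
    ((superpolynomialDecay_K1.inv_param_mul tendsto_id).const_mul 2 |>.congr fun x ↦ by
      simp [mul_comm])

lemma hasDerivAt_zpow_four_mul_K2_sq_sub_K1_sq (hx : 0 < x) :
    HasDerivAt (fun x ↦ x ^ (4 : ℤ) * (K2 x ^ 2 - K1 x ^ 2))
      (-6 * (x ^ (3 : ℤ) * K1 x ^ 2)) x := by
  refine ((hasDerivAt_zpow 4 x (.inl hx.ne')).mul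
    (((hasDerivAt_K2 hx).fun_pow 2).sub ((hasDerivAt_K1 hx).fun_pow 2))).congr_deriv ?_
  simp only [Int.cast_ofNat, Int.reduceSub, zpow_ofNat, K2, Pi.sub_apply, Nat.cast_ofNat,
    Nat.add_one_sub_one, pow_one]
  field_simp
  ring

lemma superpolynomialDecay_K2_sq_sub_K1_sq :
    SuperpolynomialDecay atTop id fun x ↦ K2 x ^ 2 - K1 x ^ 2 :=
  ((superpolynomialDecay_K2.mul superpolynomialDecay_K2).add
    ((superpolynomialDecay_K1.mul superpolynomialDecay_K1).const_mul (-1))).congr fun x ↦ by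
      simp only [Pi.add_apply, Pi.mul_apply]
      ring

lemma hasExpAsymptotic_K2_sq_sub_K1_sq :
    HasExpAsymptotic (fun x ↦ K2 x ^ 2 - K1 x ^ 2) 2 (-2) (3 * π / 2) := by
  rw [← HasExpAsymptotic.zpow_mul_iff 4]
  convert HasExpAsymptotic.of_hasDerivAt two_pos
    ((eventually_gt_atTop 0).mono fun x ↦ hasDerivAt_zpow_four_mul_K2_sq_sub_K1_sq)
    (superpolynomialDecay_K2_sq_sub_K1_sq 4)
    ((hasExpAsymptotic_K1_sq.zpow_mul 3).const_mul (-6)) using 1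
  · norm_num
  · ring

lemma besselForm_eq (hx : x ≠ 0) :
    besselForm x = x⁻¹ * ((-16 * x ^ 6 + 6 * x ^ 4 - 15 / 2 * x ^ 2) * K0 x ^ 2 -
      (16 * x ^ 5 + 6 * x ^ 3 + 30 * x) * (K0 x * K1 x) +
      (16 * x ^ 6 + 2 * x ^ 4 + 33 / 2 * x ^ 2 - 30) * K1 x ^ 2) := by
  rw [besselForm, r00, r01, r11]
  field_simp
  ring

lemma superpolynomialDecay_besselForm : SuperpolynomialDecay atTop id besselForm := by
  have h00 := (superpolynomialDecay_K0.mul superpolynomialDecay_K0).polynomial_mul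
    (-16 * .X ^ 6 + 6 * .X ^ 4 - .C (15 / 2) * .X ^ 2)
  have h01 := (superpolynomialDecay_K0.mul superpolynomialDecay_K1).polynomial_mul
    (-16 * .X ^ 5 - 6 * .X ^ 3 - 30 * .X)
  have h11 := (superpolynomialDecay_K1.mul superpolynomialDecay_K1).polynomial_mul
    (16 * .X ^ 6 + 2 * .X ^ 4 + .C (33 / 2) * .X ^ 2 - 30)
  refine (((h00.add h01).add h11).inv_param_mul tendsto_id).congr' ?_
  filter_upwards [eventually_ne_atTop 0] with x hx
  rw [besselForm_eq hx]
  simp only [id_eq, Polynomial.eval_sub, Polynomial.eval_add, Polynomial.eval_neg,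
    Polynomial.eval_mul, Polynomial.eval_ofNat, Polynomial.eval_pow, Polynomial.eval_X,
    Polynomial.eval_C, Pi.mul_apply, Pi.inv_apply, Pi.add_apply]
  ring

lemma hasDerivAt_r00 (z : ℝ) : HasDerivAt r00 (-2560 * z ^ 4 + 144 * z ^ 2 - 15) z := by
  refine ((hasDerivAt_id z).mul ((((hasDerivAt_pow 4 z).const_mul (-512)).add
    ((hasDerivAt_pow 2 z).const_mul 48)).sub_const 15)).congr_deriv ?_
  simp only [Pi.add_apply, id]
  ring

lemma hasDerivAt_r01 (z : ℝ) : HasDerivAt r01 (-(512 * z ^ 3 + 24 * z)) z := by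
  refine ((((hasDerivAt_pow 4 z).const_mul 128).add
    ((hasDerivAt_pow 2 z).const_mul 12)).add_const 15).neg.congr_deriv ?_
  ring

lemma hasDerivAt_r11 {z : ℝ} (hz : z ≠ 0) :
    HasDerivAt r11 (2560 * z ^ 4 + 48 * z ^ 2 + 33 + 15 / z ^ 2) z := by
  refine ((((((hasDerivAt_pow 6 z).const_mul 512).add ((hasDerivAt_pow 4 z).const_mul 16)).add
    ((hasDerivAt_pow 2 z).const_mul 33)).sub_const 15).div (hasDerivAt_id z) hz).congr_deriv ?_
  simp only [Pi.add_apply, id]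
  field_simp
  ring

lemma hasDerivAt_besselForm (hx : 0 < x) :
    HasDerivAt besselForm
      (4 * (x⁻¹ * besselForm x) + 105 / 2 * (K2 x ^ 2 - K1 x ^ 2)) x := by
  have hhalf : HasDerivAt (fun x : ℝ ↦ x / 2) (1 / 2) x := (hasDerivAt_id x).div_const 2
  have hK0 := hasDerivAt_K0 hx
  have hK1 := hasDerivAt_K1 hx
  refine (((((hasDerivAt_r00 _).comp x hhalf).mul (hK0.fun_pow 2)).add
    ((((hasDerivAt_r01 _).comp x hhalf).const_mul 2).mul (hK0.mul hK1))).add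
    (((hasDerivAt_r11 (half_pos hx).ne').comp x hhalf).mul (hK1.fun_pow 2))).congr_deriv ?_
  simp only [Pi.mul_apply, Function.comp_apply, besselForm, r00, r01, r11, K2]
  field_simp
  ring

lemma hasDerivAt_zpow_neg_four_mul_besselForm (hx : 0 < x) :
    HasDerivAt (fun x ↦ x ^ (-4 : ℤ) * besselForm x)
      (105 / 2 * (x ^ (-4 : ℤ) * (K2 x ^ 2 - K1 x ^ 2))) x := by
  refine ((hasDerivAt_zpow (-4) x (.inl hx.ne')).mul (hasDerivAt_besselForm hx)).congr_deriv ?_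
  rw [zpow_sub_one₀ hx.ne']
  push_cast
  ring

lemma hasExpAsymptotic_besselForm : HasExpAsymptotic besselForm 2 (-2) (-315 * π / 8) := by
  rw [← HasExpAsymptotic.zpow_mul_iff (-4)]
  convert HasExpAsymptotic.of_hasDerivAt two_pos
    ((eventually_gt_atTop 0).mono fun x ↦ hasDerivAt_zpow_neg_four_mul_besselForm)
    ((superpolynomialDecay_iff_zpow_tendsto_zero _ tendsto_id).1 superpolynomialDecay_besselForm
      (-4))
    ((hasExpAsymptotic_K2_sq_sub_K1_sq.zpow_mul (-4)).const_mul (105 / 2)) using 1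
  ring

lemma isBigO_one_besselForm :
    (fun x ↦ x * (x ^ 2 * exp (2 * x) * besselForm x + 315 * π / 8)) =O[atTop]
      fun _ ↦ (1 : ℝ) :=
  hasExpAsymptotic_besselForm.isBigO_one.congr_left fun x ↦ by
    rw [neg_neg, zpow_ofNat]
    ring

end BesselForm

lemma fPdiag_eq_mul_besselForm (n₁ : ℤ) (y : ℝ) :
    fPdiag n₁ y = 32 * π * (sigma2 n₁.natAbs : ℝ) ^ 2 / (315 * |(n₁ : ℝ)| ^ 3) *
      besselForm (2 * π * |(n₁ : ℝ)| * y) := by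
  rw [fPdiag, besselForm, show 2 * π * |(n₁ : ℝ)| * y / 2 = π * |(n₁ : ℝ)| * y by ring]
  ring

lemma fDiag_sub_eq_fPdiag (n₁ : ℤ) (y : ℝ) :
    fDiag n₁ y - 8 * (sigma2 n₁.natAbs : ℝ) ^ 2 / (21 * π ^ 2 * (n₁ : ℝ) ^ 6 * y ^ 3) =
      fPdiag n₁ y := by
  rw [fDiag, mul_right_comm 21 (π ^ 2)]
  exact add_sub_cancel_right _ _

/-- large-`y` behaviour of the complete mode `f̂_{n₁,-n₁}`:
`y·( y²·e^{4π|n₁|y}·(F(y) − 8σ₂(|n₁|)²/(21π²n₁⁶y³)) + σ₂(|n₁|)²/|n₁|⁵ )` stays bounded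
as `y → ∞`. -/
theorem mode_diag_large_y (n₁ : ℤ) (h₁ : n₁ ≠ 0) :
    ∃ C : ℝ, ∀ᶠ y in Filter.atTop,
      |y * (y ^ 2 * Real.exp (4 * π * |(n₁ : ℝ)| * y) *
            (fDiag n₁ y -
              8 * (sigma2 n₁.natAbs : ℝ) ^ 2 / (21 * π ^ 2 * (n₁ : ℝ) ^ 6 * y ^ 3)) +
          (sigma2 n₁.natAbs : ℝ) ^ 2 / |(n₁ : ℝ)| ^ 5)| ≤ C := by
  have hN : 0 < |(n₁ : ℝ)| := abs_pos.2 (Int.cast_ne_zero.2 h₁)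
  have hlim : Tendsto (fun y ↦ 2 * π * |(n₁ : ℝ)| * y) atTop atTop :=
    tendsto_id.const_mul_atTop (mul_pos two_pi_pos hN)
  obtain ⟨C, hC⟩ := ((isBigO_one_besselForm.comp_tendsto hlim).const_mul_left
    (4 * (sigma2 n₁.natAbs : ℝ) ^ 2 / (315 * π ^ 2 * |(n₁ : ℝ)| ^ 6))).bound
  refine ⟨C * ‖(1 : ℝ)‖, hC.mono fun y hy ↦ (congrArg abs ?_).trans_le hy⟩
  rw [fDiag_sub_eq_fPdiag, fPdiag_eq_mul_besselForm, Function.comp_apply,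
    show 4 * π * |(n₁ : ℝ)| * y = 2 * (2 * π * |(n₁ : ℝ)| * y) by ring]
  field_simp
  ring
end

section
/- Let h : ℝ → ℝ be defined by h(u) = (7 + 44u² + 40u⁴)/(3√(1+u²)) − (16/(3π))·( 4/3 + 5u² + u·(3 + 5u²)·arctan(u) ). Then h is integrable on ℝ, ∫_ℝ h(u) du = 1/6, and for every nonzero real number r the Fourier transform ĥ(r) = ∫_ℝ h(u)·e^{−2πiru} du equals 2·( 10/(π²r²) + 1 )·K₀(2π|r|) + ( 4·(3π²r² + 5)/(π³|r|³) )·K₁(2π|r|) − ( 32/(3π·√|r|) )·K_{7/2}(2π|r|). -/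
open Real MeasureTheory

/-- The function `h` from the Poincaré-series solution. -/
noncomputable def hfun (u : ℝ) : ℝ :=
  (7 + 44 * u ^ 2 + 40 * u ^ 4) / (3 * Real.sqrt (1 + u ^ 2)) -
    16 / (3 * π) * (4 / 3 + 5 * u ^ 2 + u * (3 + 5 * u ^ 2) * Real.arctan u)

/-- Modified Bessel function `K_{7/2}`. -/
noncomputable def K7half (x : ℝ) : ℝ :=
  Real.sqrt (π / (2 * x)) * (1 + 6 / x + 15 / x ^ 2 + 15 / x ^ 3) * Real.exp (-x)

/-!
`h` is a superposition `∫₀^∞ ρ(t) P(cosh t, u) dt` of the Cauchy kernels `P(s, u) = s / (s² + u²)`,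
with density `ρ(t) = (2/3π) (5 e^{-4t} - 2 e^{-2t})`: the integrals `∫₀^∞ e^{-νt} P(cosh t, u) dt`
are elementary for `ν = 0` and `ν = 2`, and a recurrence linking `ν - 2`, `ν`, `ν + 2` gives
`ν = 4`. Each kernel has Fourier transform `π e^{-2π|r|s}`, so with `x = 2π|r|` the transform of
`h` is a combination of the integrals `∫₀^∞ e^{-νt - x cosh t} dt` for `ν = 4` and `ν = 2`.
Integrating by parts relates `ν - 1`, `ν`, `ν + 1`, which reduces them to `K₀`, `K₁` and boundary
terms in `e^{-x}`; the boundary terms assemble into `K_{7/2}`. At `r = 0` the integrals are `1/ν`.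
-/

open Set Filter Topology FourierTransform

section CauchyKernel

/-- The unnormalised Cauchy density (Poisson kernel of the upper half-plane) of scale `s`. -/
noncomputable def cauchyKernel (s u : ℝ) : ℝ := s / (s ^ 2 + u ^ 2)

lemma cauchyKernel_nonneg {s : ℝ} (hs : 0 ≤ s) (u : ℝ) : 0 ≤ cauchyKernel s u := by
  unfold cauchyKernel
  positivity

lemma cauchyKernel_eq_pi_mul_cauchyPDFReal {s : ℝ} (hs : 0 ≤ s) :
    cauchyKernel s = fun u => π * ProbabilityTheory.cauchyPDFReal 0 s.toNNReal u := by
  ext u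
  rw [cauchyKernel, ProbabilityTheory.cauchyPDFReal_def, Real.coe_toNNReal s hs]
  field_simp
  ring

lemma integrable_cauchyKernel {s : ℝ} (hs : 0 ≤ s) : Integrable (cauchyKernel s) := by
  rw [cauchyKernel_eq_pi_mul_cauchyPDFReal hs]
  exact (ProbabilityTheory.integrable_cauchyPDFReal 0).const_mul π

lemma integral_cauchyKernel {s : ℝ} (hs : 0 < s) : ∫ u, cauchyKernel s u = π := by
  rw [cauchyKernel_eq_pi_mul_cauchyPDFReal hs.le, integral_const_mul,
    ProbabilityTheory.integral_cauchyPDFReal_eq_one 0 (Real.toNNReal_pos.2 hs).ne', mul_one]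

lemma integrable_exp_neg_mul_abs {b : ℝ} (hb : 0 < b) :
    Integrable fun x : ℝ => Real.exp (-b * |x|) := by
  refine .of_integral_ne_zero ?_
  rw [integral_comp_abs (f := fun x => Real.exp (-b * x)), integral_exp_mul_Ioi (neg_neg_of_pos hb)]
  simp [hb.ne']

lemma integral_cexp_mul_exp_neg_mul_abs {b : ℝ} (hb : 0 < b) (a : ℝ) :
    ∫ x : ℝ, Complex.exp (a * x * Complex.I) * (Real.exp (-b * |x|) : ℂ) =
      (2 * cauchyKernel b a : ℝ) := by
  have re_left : 0 < (b + a * Complex.I).re := by simpa using hb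
  have re_right : (-b + a * Complex.I).re < 0 := by simpa using hb
  have eq_left : EqOn (fun x : ℝ => Complex.exp (a * x * Complex.I) * (Real.exp (-b * |x|) : ℂ))
      (fun x : ℝ => Complex.exp ((b + a * Complex.I) * x)) (Iic 0) := fun x hx => by
    simp only [Complex.ofReal_exp, ← Complex.exp_add, abs_of_nonpos (mem_Iic.1 hx)]
    push_cast
    ring_nf
  have eq_right : EqOn (fun x : ℝ => Complex.exp (a * x * Complex.I) * (Real.exp (-b * |x|) : ℂ))
      (fun x : ℝ => Complex.exp ((-b + a * Complex.I) * x)) (Ioi 0) := fun x hx => by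
    simp only [Complex.ofReal_exp, ← Complex.exp_add, abs_of_pos (mem_Ioi.1 hx)]
    push_cast
    ring_nf
  have ne_left : (b + a * Complex.I : ℂ) ≠ 0 := fun h => by simp [h] at re_left
  have ne_right : (-b + a * Complex.I : ℂ) ≠ 0 := fun h => by simp [h] at re_right
  have factor : (b ^ 2 + a ^ 2 : ℂ) = -((b + a * Complex.I) * (-b + a * Complex.I)) := by
    linear_combination (a : ℂ) ^ 2 * Complex.I_sq
  rw [← intervalIntegral.integral_Iic_add_Ioi
      ((integrableOn_exp_mul_complex_Iic re_left 0).congr_fun eq_left.symm measurableSet_Iic)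
      ((integrableOn_exp_mul_complex_Ioi re_right 0).congr_fun eq_right.symm measurableSet_Ioi),
    setIntegral_congr_fun measurableSet_Iic eq_left,
    setIntegral_congr_fun measurableSet_Ioi eq_right,
    integral_exp_mul_complex_Iic re_left, integral_exp_mul_complex_Ioi re_right, cauchyKernel]
  push_cast
  rw [factor]
  simp only [mul_zero, Complex.exp_zero]
  field_simp
  ring

lemma fourier_exp_neg_mul_abs {s : ℝ} (hs : 0 < s) :
    𝓕 (fun x : ℝ => (Real.exp (-(2 * π * s) * |x|) : ℂ)) =
      fun u => ((π⁻¹ * cauchyKernel s u : ℝ) : ℂ) := by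
  ext u
  calc 𝓕 (fun x : ℝ => (Real.exp (-(2 * π * s) * |x|) : ℂ)) u
      = ∫ x : ℝ, Complex.exp ((-2 * π * u : ℝ) * x * Complex.I) *
          (Real.exp (-(2 * π * s) * |x|) : ℂ) := by
        rw [Real.fourier_real_eq_integral_exp_smul]
        congr! 5
        push_cast
        ring
    _ = ((2 * cauchyKernel (2 * π * s) (-2 * π * u) : ℝ) : ℂ) :=
        integral_cexp_mul_exp_neg_mul_abs (by positivity) _
    _ = ((π⁻¹ * cauchyKernel s u : ℝ) : ℂ) := by
        congr 1
        unfold cauchyKernel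
        field_simp

lemma fourier_cauchyKernel {s : ℝ} (hs : 0 < s) (r : ℝ) :
    𝓕 (fun u => (cauchyKernel s u : ℂ)) r = (π * Real.exp (-(2 * π * |r|) * s) : ℝ) := by
  have inversion := Continuous.fourierInv_fourier_eq
    (f := fun x : ℝ => (Real.exp (-(2 * π * s) * |x|) : ℂ)) (by fun_prop)
    (integrable_exp_neg_mul_abs (by positivity)).ofReal
    (by rw [fourier_exp_neg_mul_abs hs]; exact ((integrable_cauchyKernel hs.le).const_mul _).ofReal)
  have at_neg := congrFun inversion (-r)
  rw [Real.fourierInv_eq_fourier_neg, neg_neg, abs_neg, fourier_exp_neg_mul_abs hs] at at_neg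
  calc 𝓕 (fun u => (cauchyKernel s u : ℂ)) r
      = π * 𝓕 (fun u => ((π⁻¹ * cauchyKernel s u : ℝ) : ℂ)) r := by
        simp only [Real.fourier_real_eq_integral_exp_smul, ← integral_const_mul, smul_eq_mul]
        congr! 2
        push_cast
        field_simp
    _ = (π * Real.exp (-(2 * π * |r|) * s) : ℝ) := by
        rw [at_neg, ← Complex.ofReal_mul]
        ring_nf

end CauchyKernel

section CauchyMixture

variable {α : Type*} [MeasurableSpace α] {μ : Measure α} {ρ s : α → ℝ}

lemma integrable_prod_mul_cauchyKernel (hρ : Integrable ρ μ) (hs : Measurable s)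
    (hpos : ∀ a, 0 < s a) :
    Integrable (fun p : α × ℝ => ρ p.1 * cauchyKernel (s p.1) p.2) (μ.prod volume) := by
  have norm_integral (a : α) : ∫ u, ‖ρ a * cauchyKernel (s a) u‖ = ‖ρ a‖ * π := by
    simp only [norm_mul, Real.norm_of_nonneg (cauchyKernel_nonneg (hpos a).le _),
      integral_const_mul, integral_cauchyKernel (hpos a)]
  have kernel_measurable : Measurable fun p : α × ℝ => cauchyKernel (s p.1) p.2 := by
    unfold cauchyKernel
    fun_prop
  refine (integrable_prod_iff
    (hρ.aestronglyMeasurable.comp_fst.mul kernel_measurable.aestronglyMeasurable)).2 ⟨?_, ?_⟩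
  · exact .of_forall fun a => (integrable_cauchyKernel (hpos a).le).const_mul (ρ a)
  · simpa only [Pi.mul_apply, norm_integral] using hρ.norm.mul_const π

variable [SFinite μ]

lemma integrable_integral_mul_cauchyKernel (hρ : Integrable ρ μ) (hs : Measurable s)
    (hpos : ∀ a, 0 < s a) : Integrable fun u => ∫ a, ρ a * cauchyKernel (s a) u ∂μ :=
  (integrable_prod_mul_cauchyKernel hρ hs hpos).integral_prod_right

lemma fourier_integral_mul_cauchyKernel (hρ : Integrable ρ μ) (hs : Measurable s)
    (hpos : ∀ a, 0 < s a) (r : ℝ) :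
    𝓕 (fun u => ((∫ a, ρ a * cauchyKernel (s a) u ∂μ : ℝ) : ℂ)) r =
      (π * ∫ a, ρ a * Real.exp (-(2 * π * |r|) * s a) ∂μ : ℝ) := by
  have phased : Integrable (Function.uncurry fun (a : α) (u : ℝ) =>
      Complex.exp ((-2 * π * u * r : ℝ) * Complex.I) * ((ρ a * cauchyKernel (s a) u : ℝ) : ℂ))
      (μ.prod volume) :=
    Integrable.bdd_mul (c := 1) (integrable_prod_mul_cauchyKernel hρ hs hpos).ofReal
      (f := fun p : α × ℝ => Complex.exp ((-2 * π * p.2 * r : ℝ) * Complex.I))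
      (Measurable.aestronglyMeasurable (by fun_prop))
      (.of_forall fun p => (Complex.norm_exp_ofReal_mul_I _).le)
  have inner (a : α) : ∫ u : ℝ, Complex.exp ((-2 * π * u * r : ℝ) * Complex.I) *
      ((ρ a * cauchyKernel (s a) u : ℝ) : ℂ) =
      ((π * (ρ a * Real.exp (-(2 * π * |r|) * s a)) : ℝ) : ℂ) := by
    calc _ = ρ a * 𝓕 (fun u => (cauchyKernel (s a) u : ℂ)) r := by
          simp only [Real.fourier_real_eq_integral_exp_smul, ← integral_const_mul, smul_eq_mul]
          congr! 2
          push_cast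
          ring
      _ = _ := by
          rw [fourier_cauchyKernel (hpos a)]
          push_cast
          ring
  rw [Real.fourier_real_eq_integral_exp_smul]
  simp only [← integral_complex_ofReal, smul_eq_mul, ← integral_const_mul]
  rw [← integral_integral_swap phased]
  simp only [inner, integral_complex_ofReal, integral_const_mul]

end CauchyMixture

section IncompleteBessel

lemma tendsto_sinh_atTop : Tendsto Real.sinh atTop atTop :=
  Real.sinhOrderIso.tendsto_atTop

lemma tendsto_cosh_atTop : Tendsto Real.cosh atTop atTop :=
  tendsto_atTop_mono (fun t => (Real.sinh_lt_cosh t).le) tendsto_sinh_atTop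

lemma tendsto_exp_neg_mul_atTop {ν : ℝ} (hν : 0 < ν) :
    Tendsto (fun t => Real.exp (-ν * t)) atTop (𝓝 0) :=
  Real.tendsto_exp_atBot.comp (tendsto_id.const_mul_atTop_of_neg (neg_neg_of_pos hν))

/-- The incomplete modified Bessel function `∫₀^∞ e^{-νt - x cosh t} dt`; its even part in the
order `ν` is the integral `∫₀^∞ e^{-x cosh t} cosh(νt) dt` representing `K_ν(x)`. -/
noncomputable def incompleteBesselK (ν x : ℝ) : ℝ :=
  ∫ t in Ioi (0 : ℝ), Real.exp (-ν * t) * Real.exp (-x * Real.cosh t)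

variable {x : ℝ}

lemma eventually_exp_neg_mul_cosh_le (ν : ℝ) (hx : 0 < x) :
    ∀ᶠ t in atTop, Real.exp (-ν * t) * Real.exp (-x * Real.cosh t) ≤ Real.exp (-1 * t) := by
  filter_upwards [eventually_ge_atTop 0, eventually_ge_atTop (4 * (1 - ν) / x)] with t ht htx
  have quadratic_le_cosh : t ^ 2 / 4 ≤ Real.cosh t := by
    rw [Real.cosh_eq]
    linarith [Real.quadratic_le_exp_of_nonneg ht, Real.exp_pos (-t)]
  rw [← Real.exp_add, Real.exp_le_exp]
  rw [div_le_iff₀ hx] at htx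
  nlinarith

lemma tendsto_exp_neg_mul_mul_exp_neg_mul_cosh (ν : ℝ) (hx : 0 < x) :
    Tendsto (fun t => Real.exp (-ν * t) * Real.exp (-x * Real.cosh t)) atTop (𝓝 0) :=
  squeeze_zero' (.of_forall fun _ => by positivity) (eventually_exp_neg_mul_cosh_le ν hx)
    (tendsto_exp_neg_mul_atTop one_pos)

lemma integrableOn_exp_neg_mul_mul_exp_neg_mul_cosh (ν : ℝ) (hx : 0 < x) :
    IntegrableOn (fun t => Real.exp (-ν * t) * Real.exp (-x * Real.cosh t)) (Ioi 0) := by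
  refine integrable_of_isBigO_exp_neg one_pos (by fun_prop) (.of_bound' ?_)
  filter_upwards [eventually_exp_neg_mul_cosh_le ν hx] with t ht
  rwa [Real.norm_of_nonneg (by positivity), Real.norm_of_nonneg (by positivity)]

lemma integrableOn_exp_neg_mul_mul_exp_neg_mul_cosh_of_nonneg {ν : ℝ} (hν : 0 < ν) (hx : 0 ≤ x) :
    IntegrableOn (fun t => Real.exp (-ν * t) * Real.exp (-x * Real.cosh t)) (Ioi 0) := by
  refine (exp_neg_integrableOn_Ioi 0 hν).mul_bdd (c := 1)
    (Measurable.aestronglyMeasurable (by fun_prop)) (.of_forall fun t => ?_)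
  rw [Real.norm_of_nonneg (by positivity), Real.exp_le_one_iff]
  nlinarith [Real.cosh_pos t]

lemma incompleteBesselK_zero_right {ν : ℝ} (hν : 0 < ν) : incompleteBesselK ν 0 = 1 / ν := by
  simp [incompleteBesselK, -neg_mul, integral_exp_mul_Ioi (neg_neg_of_pos hν)]

lemma incompleteBesselK_zero_left (x : ℝ) : incompleteBesselK 0 x = K0 x := by
  simp [incompleteBesselK, K0]

lemma incompleteBesselK_neg_one_add_one (hx : 0 < x) :
    incompleteBesselK (-1) x + incompleteBesselK 1 x = 2 * K1 x := by
  rw [incompleteBesselK, incompleteBesselK, K1,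
    ← integral_add (integrableOn_exp_neg_mul_mul_exp_neg_mul_cosh _ hx)
      (integrableOn_exp_neg_mul_mul_exp_neg_mul_cosh _ hx), ← integral_const_mul]
  refine setIntegral_congr_fun measurableSet_Ioi fun t _ => ?_
  simp only [Real.cosh_eq t]
  ring_nf

/-- This is `∫₀^∞ d(e^{-νt - x cosh t})`, with `sinh t · e^{-νt}` split into exponentials. -/
lemma incompleteBesselK_recurrence (ν : ℝ) (hx : 0 < x) :
    x * (incompleteBesselK (ν - 1) x - incompleteBesselK (ν + 1) x) =
      2 * (Real.exp (-x) - ν * incompleteBesselK ν x) := by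
  have integrable (ν : ℝ) := integrableOn_exp_neg_mul_mul_exp_neg_mul_cosh ν hx
  have deriv (t : ℝ) : HasDerivAt (fun t => Real.exp (-ν * t) * Real.exp (-x * Real.cosh t))
      (-ν * (Real.exp (-ν * t) * Real.exp (-x * Real.cosh t)) -
        x / 2 * (Real.exp (-(ν - 1) * t) * Real.exp (-x * Real.cosh t) -
          Real.exp (-(ν + 1) * t) * Real.exp (-x * Real.cosh t))) t := by
    refine (((hasDerivAt_id t).const_mul (-ν)).exp.mul
      ((Real.hasDerivAt_cosh t).const_mul (-x)).exp).congr_deriv ?_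
    have exp_sub : Real.exp (-(ν - 1) * t) = Real.exp (-ν * t) * Real.exp t := by
      rw [← Real.exp_add]; ring_nf
    have exp_add : Real.exp (-(ν + 1) * t) = Real.exp (-ν * t) * Real.exp (-t) := by
      rw [← Real.exp_add]; ring_nf
    rw [exp_sub, exp_add, Real.sinh_eq, id]
    ring
  have boundary := integral_Ioi_of_hasDerivAt_of_tendsto' (a := 0) (fun t _ => deriv t)
    (((integrable ν).const_mul _).sub (((integrable _).fun_sub (integrable _)).const_mul _))
    (tendsto_exp_neg_mul_mul_exp_neg_mul_cosh ν hx)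
  rw [integral_sub ((integrable ν).const_mul _)
      (((integrable _).fun_sub (integrable _)).const_mul _),
    integral_const_mul, integral_const_mul, integral_sub (integrable _) (integrable _)] at boundary
  simp only [mul_zero, Real.exp_zero, Real.cosh_zero, mul_one, one_mul, zero_sub] at boundary
  unfold incompleteBesselK
  linarith

lemma five_mul_incompleteBesselK_four_sub (hx : 0 < x) :
    5 * incompleteBesselK 4 x - 2 * incompleteBesselK 2 x =
      (3 + 120 / x ^ 2) * K0 x + (36 / x + 240 / x ^ 3) * K1 x
        - Real.exp (-x) * (16 / x + 96 / x ^ 2 + 240 / x ^ 3 + 240 / x ^ 4) := by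
  have rec_zero := incompleteBesselK_recurrence 0 hx
  have rec_one := incompleteBesselK_recurrence 1 hx
  have rec_two := incompleteBesselK_recurrence 2 hx
  have rec_three := incompleteBesselK_recurrence 3 hx
  have sum_one := incompleteBesselK_neg_one_add_one hx
  norm_num [incompleteBesselK_zero_left] at rec_zero rec_one rec_two rec_three
  have order_one : incompleteBesselK 1 x = K1 x - Real.exp (-x) / x := by
    field_simp
    linear_combination x / 2 * sum_one - rec_zero / 2
  have order_two : incompleteBesselK 2 x =
      K0 x + 2 / x * incompleteBesselK 1 x - 2 * Real.exp (-x) / x := by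
    field_simp
    linear_combination -rec_one
  have order_three : incompleteBesselK 3 x =
      incompleteBesselK 1 x + 4 / x * incompleteBesselK 2 x - 2 * Real.exp (-x) / x := by
    field_simp
    linear_combination -rec_two
  have order_four : incompleteBesselK 4 x =
      incompleteBesselK 2 x + 6 / x * incompleteBesselK 3 x - 2 * Real.exp (-x) / x := by
    field_simp
    linear_combination -rec_three
  rw [order_four, order_three, order_two, order_one]
  field_simp
  ring

end IncompleteBessel

section CoshCauchyMixture

/-- The mixture of Cauchy kernels of scale `cosh t` with weight `e^{-νt}` on `(0, ∞)`. -/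
noncomputable def coshCauchyMixture (ν u : ℝ) : ℝ :=
  ∫ t in Ioi (0 : ℝ), Real.exp (-ν * t) * cauchyKernel (Real.cosh t) u

lemma cauchyKernel_cosh_le (t u : ℝ) :
    cauchyKernel (Real.cosh t) u ≤ 2 * Real.exp (-t) := by
  have cosh_pos := Real.cosh_pos t
  have one_le : 1 ≤ 2 * Real.exp (-t) * Real.cosh t := by
    have exp_neg_mul_exp : Real.exp (-t) * Real.exp t = 1 := by
      rw [← Real.exp_add, neg_add_cancel, Real.exp_zero]
    rw [Real.cosh_eq]
    nlinarith [Real.exp_pos (-t)]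
  rw [cauchyKernel, div_le_iff₀ (by positivity)]
  calc Real.cosh t ≤ 2 * Real.exp (-t) * Real.cosh t * Real.cosh t :=
        le_mul_of_one_le_left cosh_pos.le one_le
    _ ≤ 2 * Real.exp (-t) * (Real.cosh t ^ 2 + u ^ 2) := by
        rw [mul_assoc _ (Real.cosh t), ← sq]
        gcongr
        exact le_add_of_nonneg_right (sq_nonneg u)

lemma continuous_cauchyKernel_cosh (u : ℝ) :
    Continuous fun t => cauchyKernel (Real.cosh t) u :=
  Real.continuous_cosh.div (by fun_prop) fun t => by have := Real.cosh_pos t; positivity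

lemma integrableOn_exp_neg_mul_mul_cauchyKernel_cosh {ν : ℝ} (hν : -1 < ν) (u : ℝ) :
    IntegrableOn (fun t => Real.exp (-ν * t) * cauchyKernel (Real.cosh t) u) (Ioi 0) := by
  refine ((exp_neg_integrableOn_Ioi 0 (b := ν + 1) (by linarith)).const_mul 2).mono'
    (Continuous.aestronglyMeasurable
      (.mul (by fun_prop) (continuous_cauchyKernel_cosh u))) (.of_forall fun t => ?_)
  have kernel_nonneg := cauchyKernel_nonneg (Real.cosh_pos t).le u
  rw [Real.norm_of_nonneg (by positivity)]
  calc Real.exp (-ν * t) * cauchyKernel (Real.cosh t) u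
      ≤ Real.exp (-ν * t) * (2 * Real.exp (-t)) := by gcongr; exact cauchyKernel_cosh_le t u
    _ = 2 * Real.exp (-(ν + 1) * t) := by
        rw [mul_left_comm, ← Real.exp_add]
        ring_nf

lemma hasDerivAt_arctan_sinh_div_sqrt (u t : ℝ) :
    HasDerivAt (fun t => Real.arctan (Real.sinh t / √(1 + u ^ 2)))
      (√(1 + u ^ 2) * cauchyKernel (Real.cosh t) u) t := by
  refine ((Real.hasDerivAt_sinh t).div_const _).arctan.congr_deriv ?_
  have denominator : Real.cosh t ^ 2 + u ^ 2 = √(1 + u ^ 2) ^ 2 + Real.sinh t ^ 2 := by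
    rw [Real.sq_sqrt (by positivity), Real.cosh_sq]
    ring
  rw [cauchyKernel, denominator]
  field_simp

lemma hasDerivAt_arctan_div_cosh (u t : ℝ) :
    HasDerivAt (fun t => Real.arctan (u / Real.cosh t))
      (-(u * Real.sinh t / (Real.cosh t ^ 2 + u ^ 2))) t := by
  have cosh_pos := Real.cosh_pos t
  refine ((hasDerivAt_const t u).fun_div (Real.hasDerivAt_cosh t) cosh_pos.ne').arctan.congr_deriv
    ?_
  field_simp
  ring

lemma tendsto_arctan_sinh_div_sqrt (u : ℝ) :
    Tendsto (fun t => Real.arctan (Real.sinh t / √(1 + u ^ 2))) atTop (𝓝 (π / 2)) :=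
  (Real.tendsto_arctan_atTop.mono_right nhdsWithin_le_nhds).comp
    (tendsto_sinh_atTop.atTop_div_const (by positivity))

lemma tendsto_arctan_div_cosh (u : ℝ) :
    Tendsto (fun t => Real.arctan (u / Real.cosh t)) atTop (𝓝 0) := by
  simpa [Function.comp_def] using
    (Real.continuous_arctan.tendsto 0).comp (tendsto_cosh_atTop.const_div_atTop u)

lemma coshCauchyMixture_zero (u : ℝ) : coshCauchyMixture 0 u = π / (2 * √(1 + u ^ 2)) := by
  have integrable := integrableOn_exp_neg_mul_mul_cauchyKernel_cosh (neg_one_lt_zero) u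
  simp only [coshCauchyMixture, neg_zero, zero_mul, Real.exp_zero, one_mul] at integrable ⊢
  have total := integral_Ioi_of_hasDerivAt_of_tendsto'
    (fun t _ => hasDerivAt_arctan_sinh_div_sqrt u t) (integrable.const_mul _)
    (tendsto_arctan_sinh_div_sqrt u)
  rw [integral_const_mul, Real.sinh_zero, zero_div, Real.arctan_zero, sub_zero] at total
  field_simp
  linarith

lemma exp_neg_two_mul_mul_cauchyKernel_cosh (u t : ℝ) :
    Real.exp (-2 * t) * cauchyKernel (Real.cosh t) u =
      2 * Real.exp (-t) - (1 + 2 * u ^ 2) * cauchyKernel (Real.cosh t) u +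
        2 * u * (u * Real.sinh t / (Real.cosh t ^ 2 + u ^ 2)) := by
  have exp_neg_two : Real.exp (-2 * t) = (Real.cosh t - Real.sinh t) ^ 2 := by
    rw [Real.cosh_sub_sinh, ← Real.exp_nat_mul]
    push_cast
    ring_nf
  rw [exp_neg_two, ← Real.cosh_sub_sinh, cauchyKernel]
  field_simp
  rw [sub_sq, Real.sinh_sq]
  ring

lemma coshCauchyMixture_two (u : ℝ) :
    coshCauchyMixture 2 u =
      2 + 2 * u * Real.arctan u - (1 + 2 * u ^ 2) * (π / (2 * √(1 + u ^ 2))) := by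
  have deriv (t : ℝ) : HasDerivAt (fun t => -2 * Real.exp (-t) -
        (1 + 2 * u ^ 2) / √(1 + u ^ 2) * Real.arctan (Real.sinh t / √(1 + u ^ 2)) -
        2 * u * Real.arctan (u / Real.cosh t))
      (Real.exp (-2 * t) * cauchyKernel (Real.cosh t) u) t := by
    refine ((((hasDerivAt_neg t).exp.const_mul (-2)).sub
      ((hasDerivAt_arctan_sinh_div_sqrt u t).const_mul _)).sub
      ((hasDerivAt_arctan_div_cosh u t).const_mul (2 * u))).congr_deriv ?_
    rw [exp_neg_two_mul_mul_cauchyKernel_cosh]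
    field_simp
    ring
  have limit := ((Real.tendsto_exp_neg_atTop_nhds_zero.const_mul (-2)).sub
    ((tendsto_arctan_sinh_div_sqrt u).const_mul ((1 + 2 * u ^ 2) / √(1 + u ^ 2)))).sub
    ((tendsto_arctan_div_cosh u).const_mul (2 * u))
  rw [coshCauchyMixture, integral_Ioi_of_hasDerivAt_of_tendsto' (fun t _ => deriv t)
    (integrableOn_exp_neg_mul_mul_cauchyKernel_cosh (by norm_num) u) limit]
  simp only [neg_zero, Real.exp_zero, Real.sinh_zero, Real.cosh_zero, zero_div, Real.arctan_zero,
    div_one]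
  field_simp
  ring

lemma exp_neg_mul_recurrence_mul_cauchyKernel_cosh (ν u t : ℝ) :
    Real.exp (-(ν + 2) * t) * cauchyKernel (Real.cosh t) u +
        Real.exp (-(ν - 2) * t) * cauchyKernel (Real.cosh t) u +
        (2 + 4 * u ^ 2) * (Real.exp (-ν * t) * cauchyKernel (Real.cosh t) u) =
      2 * Real.exp (-(ν - 1) * t) + 2 * Real.exp (-(ν + 1) * t) := by
  have exp_shift (k : ℝ) : Real.exp (-(ν + k) * t) = Real.exp (-ν * t) * Real.exp (-k * t) := by
    rw [← Real.exp_add]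
    ring_nf
  have two_cosh : 2 * Real.cosh t = Real.exp (- -1 * t) + Real.exp (-1 * t) := by
    rw [Real.cosh_eq]
    ring_nf
  have four_cosh_sq :
      4 * Real.cosh t ^ 2 = Real.exp (- -2 * t) + Real.exp (-2 * t) + 2 := by
    have cosh_two := Real.cosh_two_mul t
    rw [Real.cosh_eq, Real.sinh_sq] at cosh_two
    rw [neg_neg, neg_mul]
    linarith
  have kernel_mul : cauchyKernel (Real.cosh t) u * (Real.cosh t ^ 2 + u ^ 2) = Real.cosh t :=
    div_mul_cancel₀ _ (by have := Real.cosh_pos t; positivity)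
  rw [sub_eq_add_neg ν 2, sub_eq_add_neg ν 1, exp_shift, exp_shift, exp_shift, exp_shift]
  linear_combination Real.exp (-ν * t) *
    (4 * kernel_mul + 2 * two_cosh - cauchyKernel (Real.cosh t) u * four_cosh_sq)

lemma coshCauchyMixture_recurrence {ν : ℝ} (hν : 1 < ν) (u : ℝ) :
    coshCauchyMixture (ν + 2) u + coshCauchyMixture (ν - 2) u +
      (2 + 4 * u ^ 2) * coshCauchyMixture ν u = 2 / (ν - 1) + 2 / (ν + 1) := by
  have integrable_add := integrableOn_exp_neg_mul_mul_cauchyKernel_cosh (ν := ν + 2) (by linarith) u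
  have integrable_sub := integrableOn_exp_neg_mul_mul_cauchyKernel_cosh (ν := ν - 2) (by linarith) u
  have integrable_mid := integrableOn_exp_neg_mul_mul_cauchyKernel_cosh (ν := ν) (by linarith) u
  have integral_exp {κ : ℝ} (hκ : 0 < κ) : ∫ t in Ioi (0 : ℝ), 2 * Real.exp (-κ * t) = 2 / κ := by
    rw [integral_const_mul, integral_exp_mul_Ioi (neg_neg_of_pos hκ)]
    simp [div_eq_mul_inv]
  unfold coshCauchyMixture
  rw [← integral_add integrable_add integrable_sub, ← integral_const_mul,
    ← integral_add (integrable_add.fun_add integrable_sub) (integrable_mid.const_mul _),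
    ← integral_exp (sub_pos.2 hν), ← integral_exp (by linarith : 0 < ν + 1),
    ← integral_add ((exp_neg_integrableOn_Ioi 0 (sub_pos.2 hν)).const_mul 2)
      ((exp_neg_integrableOn_Ioi 0 (by linarith : 0 < ν + 1)).const_mul 2)]
  exact integral_congr_ae (.of_forall (exp_neg_mul_recurrence_mul_cauchyKernel_cosh ν u))

lemma hfun_eq_coshCauchyMixture (u : ℝ) :
    hfun u = 2 / (3 * π) * (5 * coshCauchyMixture 4 u - 2 * coshCauchyMixture 2 u) := by
  have recurrence := coshCauchyMixture_recurrence (ν := 2) (by norm_num) u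
  norm_num [coshCauchyMixture_zero] at recurrence
  rw [eq_sub_of_add_eq (eq_sub_of_add_eq recurrence), coshCauchyMixture_two, hfun]
  have : 0 < √(1 + u ^ 2) := by positivity
  field_simp
  ring

end CoshCauchyMixture

section HFun

/-- The weight of the scale-`cosh t` Cauchy kernel in the representation of `hfun` as a mixture of
Cauchy kernels. -/
noncomputable def hfunDensity (t : ℝ) : ℝ :=
  2 / (3 * π) * (5 * Real.exp (-4 * t) - 2 * Real.exp (-2 * t))

lemma integrableOn_hfunDensity : IntegrableOn hfunDensity (Ioi 0) :=
  (((exp_neg_integrableOn_Ioi 0 four_pos).const_mul 5).sub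
    ((exp_neg_integrableOn_Ioi 0 two_pos).const_mul 2)).const_mul _

lemma integral_hfunDensity_mul {f : ℝ → ℝ}
    (hf₄ : IntegrableOn (fun t => Real.exp (-4 * t) * f t) (Ioi 0))
    (hf₂ : IntegrableOn (fun t => Real.exp (-2 * t) * f t) (Ioi 0)) :
    ∫ t in Ioi (0 : ℝ), hfunDensity t * f t =
      2 / (3 * π) * (5 * (∫ t in Ioi (0 : ℝ), Real.exp (-4 * t) * f t) -
        2 * ∫ t in Ioi (0 : ℝ), Real.exp (-2 * t) * f t) := by
  simp_rw [← integral_const_mul, ← integral_sub (hf₄.const_mul 5) (hf₂.const_mul 2),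
    ← integral_const_mul]
  congr! 2
  unfold hfunDensity
  ring

lemma hfun_eq_integral_hfunDensity_mul_cauchyKernel :
    hfun = fun u => ∫ t in Ioi (0 : ℝ), hfunDensity t * cauchyKernel (Real.cosh t) u := by
  ext u
  rw [hfun_eq_coshCauchyMixture, integral_hfunDensity_mul
    (integrableOn_exp_neg_mul_mul_cauchyKernel_cosh (by norm_num) u)
    (integrableOn_exp_neg_mul_mul_cauchyKernel_cosh (by norm_num) u)]
  rfl

lemma integrable_hfun : Integrable hfun := by
  rw [hfun_eq_integral_hfunDensity_mul_cauchyKernel]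
  exact integrable_integral_mul_cauchyKernel integrableOn_hfunDensity Real.measurable_cosh
    Real.cosh_pos

lemma fourier_hfun (r : ℝ) :
    𝓕 (fun u => (hfun u : ℂ)) r =
      (2 / 3 * (5 * incompleteBesselK 4 (2 * π * |r|) -
        2 * incompleteBesselK 2 (2 * π * |r|)) : ℝ) := by
  have nonneg : 0 ≤ 2 * π * |r| := by positivity
  rw [hfun_eq_integral_hfunDensity_mul_cauchyKernel,
    fourier_integral_mul_cauchyKernel integrableOn_hfunDensity Real.measurable_cosh Real.cosh_pos,
    integral_hfunDensity_mul
      (integrableOn_exp_neg_mul_mul_exp_neg_mul_cosh_of_nonneg four_pos nonneg)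
      (integrableOn_exp_neg_mul_mul_exp_neg_mul_cosh_of_nonneg two_pos nonneg)]
  unfold incompleteBesselK
  field_simp

lemma integral_hfun : ∫ u, hfun u = 1 / 6 := by
  have fourier_zero := fourier_hfun 0
  rw [Real.fourier_real_eq_integral_exp_smul] at fourier_zero
  simp only [mul_zero, Complex.ofReal_zero, zero_mul, Complex.exp_zero, one_smul, abs_zero,
    integral_complex_ofReal, Complex.ofReal_inj] at fourier_zero
  rw [fourier_zero, incompleteBesselK_zero_right four_pos, incompleteBesselK_zero_right two_pos]
  norm_num

lemma one_div_sqrt_mul_K7half {a : ℝ} (ha : 0 < a) :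
    1 / √a * K7half (2 * π * a) =
      1 / (2 * a) * (1 + 6 / (2 * π * a) + 15 / (2 * π * a) ^ 2 + 15 / (2 * π * a) ^ 3) *
        Real.exp (-(2 * π * a)) := by
  have sqrt_eq : √(π / (2 * (2 * π * a))) = 1 / (2 * √a) := by
    rw [show π / (2 * (2 * π * a)) = 1 / (2 ^ 2 * a) by field_simp,
      Real.sqrt_div zero_le_one, Real.sqrt_one, Real.sqrt_mul (by positivity),
      Real.sqrt_sq zero_le_two]
  have sqrt_mul : 1 / √a * (1 / (2 * √a)) = 1 / (2 * a) := by
    rw [one_div_mul_one_div, mul_left_comm, Real.mul_self_sqrt ha.le]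
  rw [K7half, sqrt_eq, ← sqrt_mul]
  ring

lemma two_thirds_mul_five_mul_incompleteBesselK_four_sub {a : ℝ} (ha : 0 < a) :
    2 / 3 * (5 * incompleteBesselK 4 (2 * π * a) - 2 * incompleteBesselK 2 (2 * π * a)) =
      2 * (10 / (π ^ 2 * a ^ 2) + 1) * K0 (2 * π * a) +
        4 * (3 * π ^ 2 * a ^ 2 + 5) / (π ^ 3 * a ^ 3) * K1 (2 * π * a) -
        32 / (3 * π * √a) * K7half (2 * π * a) := by
  have K7half_term : 32 / (3 * π * √a) * K7half (2 * π * a) =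
      32 / (3 * π) * (1 / √a * K7half (2 * π * a)) := by
    ring
  rw [five_mul_incompleteBesselK_four_sub (by positivity), K7half_term, one_div_sqrt_mul_K7half ha]
  field_simp
  ring

lemma fourier_eq_integral_mul_exp (f : ℝ → ℂ) (r : ℝ) :
    𝓕 f r = ∫ u : ℝ, f u * Complex.exp (-2 * π * Complex.I * r * u) := by
  rw [Real.fourier_real_eq_integral_exp_smul]
  congr! 2 with u
  rw [smul_eq_mul, mul_comm]
  push_cast
  ring_nf

end HFun

/-- `hfun` is integrable with total integral `1/6`, and its Fourier
transform at `r ≠ 0` is an explicit combination of Bessel functions. -/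
theorem hfun_fourier_transform :
    Integrable hfun ∧
    (∫ u : ℝ, hfun u) = 1 / 6 ∧
    (∀ r : ℝ, r ≠ 0 →
      (∫ u : ℝ, (hfun u : ℂ) * Complex.exp (-2 * π * Complex.I * r * u)) =
        ((2 * (10 / (π ^ 2 * r ^ 2) + 1) * K0 (2 * π * |r|) +
          4 * (3 * π ^ 2 * r ^ 2 + 5) / (π ^ 3 * |r| ^ 3) * K1 (2 * π * |r|) -
          32 / (3 * π * Real.sqrt |r|) * K7half (2 * π * |r|) : ℝ) : ℂ)) := by
  refine ⟨integrable_hfun, integral_hfun, fun r hr => ?_⟩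
  rw [← fourier_eq_integral_mul_exp (fun u => (hfun u : ℂ)), fourier_hfun,
    two_thirds_mul_five_mul_incompleteBesselK_four_sub (abs_pos.2 hr), sq_abs]
end

section
/- Let h : ℝ → ℝ be defined by h(u) = (7 + 44u² + 40u⁴)/(3√(1+u²)) − (16/(3π))·( 4/3 + 5u² + u·(3 + 5u²)·arctan(u) ), and define Φ on the upper half plane by Φ(x+iy) = 4ζ(3)² · ∑_{q ≥ 1} q^{−3} ∑_{p ∈ ℤ, gcd(p,q)=1} h( (x + p/q)/y ), a sum over all rational numbers p/q written in lowest terms with q > 0. Then this sum converges absolutely for every x ∈ ℝ and y > 0, and for every integer n the n-th Fourier coefficient satisfies ∫₀¹ Φ(x+iy)·e^{−2πinx} dx = 4ζ(3)·σ_{−2}(|n|)·y·ĥ(ny), where ĥ(r) = ∫_ℝ h(u)·e^{−2πiru} du is the Fourier transform of h, σ_{−2}(m) = ∑_{d | m, d > 0} d^{−2} for m ≥ 1, and σ_{−2}(0) is interpreted as ζ(2). -/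
open Real MeasureTheory

/-- Riemann zeta function for real arguments `s > 1`, as a sum. -/
noncomputable def zetaR (s : ℝ) : ℝ := ∑' n : ℕ, 1 / ((n : ℝ) + 1) ^ s

/-- Index set of rationals `p/q` in lowest terms with `q ≥ 1`. -/
def RatIdx : Type := {pq : ℤ × ℤ // 0 < pq.2 ∧ Int.gcd pq.1 pq.2 = 1}

/-- The summand `q^{−3}·h((x + p/q)/y)` of `Φ(x+iy)/(4ζ(3)²)`. -/
noncomputable def PhiTerm (x y : ℝ) (pq : RatIdx) : ℝ :=
  ((pq.1.2 : ℝ)) ^ (-3 : ℤ) * hfun ((x + (pq.1.1 : ℝ) / (pq.1.2 : ℝ)) / y)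

/-- The divisor sum `σ₋₂(|n|)`, interpreted as `ζ(2)` when `n = 0`. -/
noncomputable def sigmaNeg2 (n : ℤ) : ℝ :=
  if n = 0 then zetaR 2 else ∑ d ∈ n.natAbs.divisors, ((d : ℝ)) ^ (-2 : ℤ)

/-- The Fourier transform of `hfun`. -/
noncomputable def hhat (r : ℝ) : ℂ :=
  ∫ u : ℝ, (hfun u : ℂ) * Complex.exp (-2 * π * Complex.I * r * u)

/-!
Multiplying by `ζ(3)` removes the coprimality condition: every pair `(q, p)` with `q ≥ 1` is
`(d * r.den, d * r.num)` for a unique `d ≥ 1` and a unique rational `r`. For a fixed denominator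
`q`, splitting `p` into residue classes modulo `q` unfolds the integral over `[0, 1]` into one over
`ℝ`, and the `n`-th Fourier coefficient of `∑ₚ f (x + p / q)` is `𝓕 f n` times a sum of `q`-th roots
of unity, namely `q` if `q ∣ n` and `0` otherwise. Summing `q⁻³ * q` over `q ∣ n` gives `σ₋₂(|n|)`.
Only `f ∈ L¹` is needed for this; pointwise absolute convergence uses `h u = O(1 / (1 + u²))`, which
holds because the growing parts of the two halves of `h` cancel.
-/

section DecayOfH

lemma sub_pow_three_div_le_arctan {t : ℝ} (ht : 0 ≤ t) : t - t ^ 3 / 3 ≤ arctan t := by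
  have h_deriv (x : ℝ) :
      HasDerivAt (fun x => arctan x - (x - x ^ 3 / 3)) (x ^ 4 / (1 + x ^ 2)) x := by
    convert! (hasDerivAt_arctan x).sub
      ((hasDerivAt_id x).sub ((hasDerivAt_pow 3 x).div_const 3)) using 1
    field_simp
    ring
  simpa using monotone_of_hasDerivAt_nonneg h_deriv (fun x => by positivity) ht

lemma arctan_le_sub_pow_three_div_add_pow_five_div {t : ℝ} (ht : 0 ≤ t) :
    arctan t ≤ t - t ^ 3 / 3 + t ^ 5 / 5 := by
  have h_deriv (x : ℝ) :
      HasDerivAt (fun x => x - x ^ 3 / 3 + x ^ 5 / 5 - arctan x) (x ^ 6 / (1 + x ^ 2)) x := by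
    convert! (((hasDerivAt_id x).sub ((hasDerivAt_pow 3 x).div_const 3)).add
      ((hasDerivAt_pow 5 x).div_const 5)).sub (hasDerivAt_arctan x) using 1
    field_simp
    ring
  simpa using monotone_of_hasDerivAt_nonneg h_deriv (fun x => by positivity) ht

lemma abs_sub_mul_pi_div_two_sub_arctan_le_of_le_one {u : ℝ} (hu : 0 ≤ u) (hu_one : u ≤ 1) :
    |4 / 3 + 5 * u ^ 2 - u * (3 + 5 * u ^ 2) * (π / 2 - arctan u)| ≤ 32 / (1 + u ^ 2) := by
  have h_angle_nonneg : 0 ≤ π / 2 - arctan u := sub_nonneg.mpr (arctan_lt_pi_div_two u).le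
  have h_angle_le : π / 2 - arctan u ≤ 2 := by
    linarith [arctan_nonneg.mpr hu, pi_lt_four]
  have h_sq : u ^ 2 ≤ 1 := pow_le_one₀ hu hu_one
  have h_prod_nonneg : 0 ≤ u * (3 + 5 * u ^ 2) * (π / 2 - arctan u) := by positivity
  have h_prod_le : u * (3 + 5 * u ^ 2) * (π / 2 - arctan u) ≤ 1 * (3 + 5 * 1) * 2 := by gcongr
  have h_right : 16 ≤ 32 / (1 + u ^ 2) := by
    rw [le_div_iff₀ (by positivity)]
    linarith
  rw [abs_le]
  constructor <;> linarith [sq_nonneg u]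

lemma abs_sub_mul_pi_div_two_sub_arctan_le_of_one_le {u : ℝ} (hu : 1 ≤ u) :
    |4 / 3 + 5 * u ^ 2 - u * (3 + 5 * u ^ 2) * (π / 2 - arctan u)| ≤ 32 / (1 + u ^ 2) := by
  have hu_pos : 0 < u := one_pos.trans_le hu
  have h_sq : 1 ≤ u ^ 2 := one_le_pow₀ hu
  have h_lower : 4 / 3 + 5 * u ^ 2 - 1 / u ^ 2 ≤ u * (3 + 5 * u ^ 2) * arctan u⁻¹ :=
    calc 4 / 3 + 5 * u ^ 2 - 1 / u ^ 2
        = u * (3 + 5 * u ^ 2) * (u⁻¹ - u⁻¹ ^ 3 / 3) := by field_simp; ring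
      _ ≤ u * (3 + 5 * u ^ 2) * arctan u⁻¹ := by
        gcongr
        exact sub_pow_three_div_le_arctan (by positivity)
  have h_upper :
      u * (3 + 5 * u ^ 2) * arctan u⁻¹ ≤ 4 / 3 + 5 * u ^ 2 + 3 / (5 * u ^ 4) :=
    calc u * (3 + 5 * u ^ 2) * arctan u⁻¹
        ≤ u * (3 + 5 * u ^ 2) * (u⁻¹ - u⁻¹ ^ 3 / 3 + u⁻¹ ^ 5 / 5) := by
          gcongr
          exact arctan_le_sub_pow_three_div_add_pow_five_div (by positivity)
      _ = 4 / 3 + 5 * u ^ 2 + 3 / (5 * u ^ 4) := by field_simp; ring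
  have h_lower_error : 1 / u ^ 2 ≤ 32 / (1 + u ^ 2) := by
    rw [div_le_div_iff₀ (by positivity) (by positivity)]
    linarith
  have h_upper_error : 3 / (5 * u ^ 4) ≤ 32 / (1 + u ^ 2) := by
    rw [div_le_div_iff₀ (by positivity) (by positivity)]
    nlinarith
  rw [← arctan_inv_of_pos hu_pos, abs_le]
  constructor <;> linarith

-- The left side is `(49 + 40 * u ^ 2) / (3 * √(1 + u ^ 2) * (A + B * √(1 + u ^ 2)))`, with
-- `A = 7 + 44 * u ^ 2 + 40 * u ^ 4` and `B = 8 * u * (3 + 5 * u ^ 2)`, by rationalizing: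
-- `A ^ 2 - B ^ 2 * (1 + u ^ 2) = 49 + 40 * u ^ 2`.
lemma abs_div_sqrt_one_add_sq_sub_le {u : ℝ} (hu : 0 ≤ u) :
    |(7 + 44 * u ^ 2 + 40 * u ^ 4) / (3 * √(1 + u ^ 2)) - 8 / 3 * (u * (3 + 5 * u ^ 2))| ≤
      3 / (1 + u ^ 2) := by
  obtain ⟨s, hs⟩ : ∃ s, s = √(1 + u ^ 2) := ⟨_, rfl⟩
  have hs_sq : s ^ 2 = 1 + u ^ 2 := hs ▸ sq_sqrt (by positivity)
  have hs_one : 1 ≤ s := hs ▸ one_le_sqrt.mpr (le_add_of_nonneg_right (sq_nonneg u))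
  have : 0 < s := one_pos.trans_le hs_one
  let D := 7 + 44 * u ^ 2 + 40 * u ^ 4 + 8 * u * (3 + 5 * u ^ 2) * s
  have hD_pos : 0 < D := by positivity
  have h_rationalize :
      (7 + 44 * u ^ 2 + 40 * u ^ 4) / (3 * s) - 8 / 3 * (u * (3 + 5 * u ^ 2)) =
        (49 + 40 * u ^ 2) / (3 * s * D) := by
    rw [eq_div_iff (by positivity)]
    field_simp
    linear_combination -(8 * u * (3 + 5 * u ^ 2)) ^ 2 * hs_sq
  have hD_ge : 7 * (1 + u ^ 2) ^ 2 ≤ s * D :=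
    calc 7 * (1 + u ^ 2) ^ 2 ≤ 7 + 44 * u ^ 2 + 40 * u ^ 4 := by nlinarith [sq_nonneg u]
      _ ≤ D := le_add_of_nonneg_right (by positivity)
      _ ≤ s * D := le_mul_of_one_le_left hD_pos.le hs_one
  rw [← hs, h_rationalize, abs_of_nonneg (by positivity),
    div_le_div_iff₀ (by positivity) (by positivity)]
  nlinarith [sq_nonneg u, sq_nonneg (u ^ 2)]

lemma hfun_neg (u : ℝ) : hfun (-u) = hfun u := by
  simp only [hfun, arctan_neg]
  ring_nf

-- The constant `π / 2 = lim arctan` is split off so that both differences are small at infinity.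
lemma hfun_eq_sub (u : ℝ) :
    hfun u =
      ((7 + 44 * u ^ 2 + 40 * u ^ 4) / (3 * √(1 + u ^ 2)) - 8 / 3 * (u * (3 + 5 * u ^ 2))) -
        16 / (3 * π) * (4 / 3 + 5 * u ^ 2 - u * (3 + 5 * u ^ 2) * (π / 2 - arctan u)) := by
  have h_pi : 16 / (3 * π) * (π / 2) = 8 / 3 := by field_simp; norm_num
  rw [hfun]
  linear_combination -(u * (3 + 5 * u ^ 2)) * h_pi

lemma abs_hfun_le (u : ℝ) : |hfun u| ≤ 67 * (1 + u ^ 2)⁻¹ := by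
  wlog hu : 0 ≤ u generalizing u with h_nonneg
  · simpa [hfun_neg] using h_nonneg (-u) (by linarith)
  have h_arctan :
      |4 / 3 + 5 * u ^ 2 - u * (3 + 5 * u ^ 2) * (π / 2 - arctan u)| ≤ 32 / (1 + u ^ 2) :=
    (le_total u 1).elim (abs_sub_mul_pi_div_two_sub_arctan_le_of_le_one hu)
      abs_sub_mul_pi_div_two_sub_arctan_le_of_one_le
  have h_coeff : 16 / (3 * π) ≤ 2 := by
    rw [div_le_iff₀ (by positivity)]
    linarith [pi_gt_three]
  calc |hfun u| ≤ 3 / (1 + u ^ 2) + 2 * (32 / (1 + u ^ 2)) := by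
        rw [hfun_eq_sub]
        refine (abs_sub _ _).trans (add_le_add (abs_div_sqrt_one_add_sq_sub_le hu) ?_)
        rw [abs_mul, abs_of_pos (by positivity)]
        gcongr
    _ = 67 * (1 + u ^ 2)⁻¹ := by ring

lemma continuous_hfun : Continuous hfun := by
  have h_sqrt (u : ℝ) : 3 * √(1 + u ^ 2) ≠ 0 := by positivity
  unfold hfun
  fun_prop (disch := assumption)

end DecayOfH

section FourierCoefficients

open scoped FourierTransform

lemma hasSum_int_of_hasSum_residues {M : Type*} [AddCommMonoid M] [TopologicalSpace M]
    [ContinuousAdd M] {q : ℕ} [NeZero q] {f : ℤ → M} {s : ZMod q → M}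
    (hf : ∀ a : ZMod q, HasSum (fun m : ℤ => f (m * q + a.val)) (s a)) :
    HasSum f (∑ a, s a) := by
  have h_extend (a : ZMod q) :
      HasSum (fun p : ℤ => if (p : ZMod q) = a then f p else 0) (s a) := by
    have h_inj : Function.Injective fun m : ℤ => m * (q : ℤ) + a.val := fun m m' h =>
      mul_right_cancel₀ (Nat.cast_ne_zero.mpr (NeZero.ne q)) (add_right_cancel h)
    refine (h_inj.hasSum_iff fun p hp => if_neg fun hpa => hp ?_).mp ?_
    · exact ⟨p / q, by rw [← hpa, ZMod.val_intCast]; exact Int.ediv_mul_add_emod p q⟩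
    · simpa [Function.comp_def] using hf a
  simpa using hasSum_sum (s := Finset.univ) fun a _ => h_extend a

lemma hasSum_smul_intervalIntegral_comp_add_div {R E : Type*} [Semiring R]
    [NormedAddCommGroup E] [NormedSpace ℝ E] [Module R E] [ContinuousConstSMul R E]
    {f : ℝ → E} (hf : Integrable f) {q : ℕ} [NeZero q] (c : ZMod q → R) :
    HasSum (fun p : ℤ => c p • ∫ x in (0 : ℝ)..1, f (x + p / q)) ((∑ a, c a) • ∫ u, f u) := by
  have hq : (q : ℝ) ≠ 0 := Nat.cast_ne_zero.mpr (NeZero.ne q)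
  rw [Finset.sum_smul]
  refine hasSum_int_of_hasSum_residues fun a => ?_
  have h := (hf.comp_add_right ((a.val : ℝ) / q)).hasSum_intervalIntegral_comp_add_int.const_smul
    (c a)
  rw [integral_add_right_eq_self f] at h
  convert! h using 5 with m
  · simp
  · push_cast
    field_simp
    ring_nf

lemma stdAddChar_intCast_eq_fourierChar {q : ℕ} [NeZero q] (p : ℤ) :
    ZMod.stdAddChar (p : ZMod q) = (𝐞 (p / q) : ℂ) := by
  rw [ZMod.stdAddChar_coe, Real.fourierChar_apply]
  push_cast
  ring_nf

lemma summable_mul_intervalIntegral_norm_comp_add_div {E : Type*} [NormedAddCommGroup E]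
    {f : ℝ → E} (hf : Integrable f) {w : ℕ+ → ℝ} (hw_nonneg : ∀ q, 0 ≤ w q)
    (hw : Summable fun q : ℕ+ => w q * q) :
    Summable fun a : ℕ+ × ℤ => w a.1 * ∫ x in (0 : ℝ)..1, ‖f (x + a.2 / a.1)‖ := by
  have h_fiber (q : ℕ+) :
      HasSum (fun p : ℤ => w q * ∫ x in (0 : ℝ)..1, ‖f (x + p / q)‖)
        (w q * q * ∫ u, ‖f u‖) := by
    simpa [mul_assoc] using (hasSum_smul_intervalIntegral_comp_add_div hf.norm
      fun _ : ZMod q => (1 : ℝ)).mul_left (w q)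
  refine (summable_prod_of_nonneg fun a => ?_).mpr ⟨fun q => (h_fiber q).summable, ?_⟩
  · exact mul_nonneg (hw_nonneg _)
      (intervalIntegral.integral_nonneg zero_le_one fun _ _ => norm_nonneg _)
  · simpa only [(h_fiber _).tsum_eq] using hw.mul_right _

variable {E : Type*} [NormedAddCommGroup E] [NormedSpace ℂ E] {f : ℝ → E}

lemma continuous_fourierChar_neg_mul (w : ℝ) : Continuous fun x : ℝ => 𝐞 (-(w * x)) :=
  Real.continuous_fourierChar.comp (continuous_const.mul continuous_id).neg

lemma integrable_fourierChar_smul (hf : Integrable f) (w : ℝ) :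
    Integrable fun x => 𝐞 (-(w * x)) • f x := by
  refine hf.mono ?_ (by simp)
  exact (continuous_fourierChar_neg_mul w).aestronglyMeasurable.smul hf.aestronglyMeasurable

-- Orthogonality of the characters modulo `q` keeps only the frequencies divisible by `q`.
lemma hasSum_intervalIntegral_fourierChar_smul_comp_add_div (hf : Integrable f) (n : ℤ)
    (q : ℕ) [NeZero q] :
    HasSum (fun p : ℤ => ∫ x in (0 : ℝ)..1, 𝐞 (-(n * x)) • f (x + p / q))
      ((if (q : ℤ) ∣ n then (q : ℂ) else 0) • 𝓕 f n) := by
  have h := hasSum_smul_intervalIntegral_comp_add_div (integrable_fourierChar_smul hf n)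
    fun a : ZMod q => ZMod.stdAddChar (a * (n : ZMod q))
  have h_fourier : 𝓕 f n = ∫ u, 𝐞 (-(n * u)) • f u := by
    simp_rw [Real.fourier_real_eq, mul_comm]
  rw [h_fourier]
  convert! h using 1
  · funext p
    rw [← intervalIntegral.integral_smul]
    refine intervalIntegral.integral_congr fun x _ => ?_
    have h_char : ZMod.stdAddChar ((p : ZMod q) * (n : ZMod q)) = (𝐞 (n * (p / q)) : ℂ) := by
      rw [← Int.cast_mul, stdAddChar_intCast_eq_fourierChar]
      push_cast
      ring_nf
    simp only [h_char, ← Circle.smul_def, smul_smul, ← AddChar.map_add_eq_mul]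
    ring_nf
  · rw [AddChar.sum_mulShift _ (ZMod.isPrimitive_stdAddChar q), ZMod.card]
    simp [ZMod.intCast_zmod_eq_zero_iff_dvd]

theorem intervalIntegral_fourierChar_smul_tsum_fractions {w : ℕ+ → ℂ}
    (hw : Summable fun q : ℕ+ => ‖w q‖ * q) (hf : Integrable f) (n : ℤ) :
    ∫ x in (0 : ℝ)..1, 𝐞 (-(n * x)) • ∑' a : ℕ+ × ℤ, w a.1 • f (x + a.2 / a.1) =
      (∑' q : ℕ+, if (q : ℤ) ∣ n then w q * q else 0) • 𝓕 f n := by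
  let F (a : ℕ+ × ℤ) (x : ℝ) : E := 𝐞 (-(n * x)) • w a.1 • f (x + a.2 / a.1)
  have hF_integrable (a : ℕ+ × ℤ) : IntervalIntegrable (F a) volume 0 1 := by
    have h := (hf.comp_add_right ((a.2 : ℝ) / a.1)).smul (w a.1)
    exact (integrable_fourierChar_smul h n).intervalIntegrable
  have hF_norm : Summable fun a => ∫ x in (0 : ℝ)..1, ‖F a x‖ := by
    simpa [F, norm_smul] using summable_mul_intervalIntegral_norm_comp_add_div hf
      (fun q => norm_nonneg (w q)) hw
  have h_exchange : HasSum (fun a => ∫ x in (0 : ℝ)..1, F a x)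
      (∫ x in (0 : ℝ)..1, ∑' a, F a x) := by
    simp only [intervalIntegral.integral_of_le zero_le_one] at hF_norm ⊢
    exact hasSum_integral_of_summable_integral_norm (fun a => (hF_integrable a).1) hF_norm
  have h_fiber (q : ℕ+) : HasSum (fun p : ℤ => ∫ x in (0 : ℝ)..1, F (q, p) x)
      ((if (q : ℤ) ∣ n then w q * q else 0) • 𝓕 f n) := by
    have h := (hasSum_intervalIntegral_fourierChar_smul_comp_add_div hf n q).const_smul (w q)
    simpa only [F, smul_comm _ (w q), intervalIntegral.integral_smul, smul_smul, mul_ite,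
      mul_zero] using h
  have h_coeff : Summable fun q : ℕ+ => if (q : ℤ) ∣ n then w q * q else 0 := by
    refine hw.of_norm_bounded fun q => ?_
    split_ifs <;> simp
  simp only [F, tsum_const_smul'] at h_exchange
  exact (h_exchange.prod_fiberwise h_fiber).unique (h_coeff.hasSum.smul_const _)

lemma fourier_comp_div (f : ℝ → E) {y : ℝ} (hy : y ≠ 0) (w : ℝ) :
    𝓕 (fun u => f (u / y)) w = |y| • 𝓕 f (w * y) := by
  rw [Real.fourier_real_eq, Real.fourier_real_eq, ← Measure.integral_comp_div]
  refine integral_congr_ae (.of_forall fun u => ?_)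
  simp only [show u / y * (w * y) = u * w by field_simp]

end FourierCoefficients

section Fractions

/-- Writing a fraction `p / q` uniquely as `(d * r.num) / (d * r.den)`. -/
noncomputable def fractionEquiv : ℕ+ × ℚ ≃ ℕ+ × ℤ :=
  Equiv.ofBijective (fun a => (a.1 * a.2.pnatDen, a.1 * a.2.num)) <| by
    have h_div (d : ℕ+) (r : ℚ) : ((d * r.num : ℤ) : ℚ) / (d * r.pnatDen : ℕ+) = r := by
      push_cast [Rat.coe_pnatDen]
      rw [mul_div_mul_left _ _ (by positivity), Rat.num_div_den]
    refine ⟨fun ⟨d, r⟩ ⟨d', r'⟩ h => ?_, fun ⟨q, p⟩ => ?_⟩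
    · obtain ⟨h_den, h_num⟩ := Prod.mk.inj h
      obtain rfl : r = r' := by rw [← h_div d r, ← h_div d' r', h_den, h_num]
      exact congrArg (·, r) (mul_right_cancel h_den)
    · obtain ⟨d, hp, hq⟩ := Rat.exists_eq_mul_div_num_and_eq_mul_div_den p
        (Int.natCast_ne_zero.mpr q.ne_zero)
      lift d to ℕ using by
        refine nonneg_of_mul_nonneg_left (hq ▸ Int.natCast_nonneg (q : ℕ)) (by positivity)
      have hd : 0 < d := Nat.pos_of_ne_zero fun hd => q.ne_zero <| by simp [hd] at hq
      refine ⟨(⟨d, hd⟩, p / (q : ℤ)), Prod.ext (PNat.coe_injective ?_) hp.symm⟩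
      exact (Int.natCast_inj.mp hq).symm

@[simp]
lemma fractionEquiv_apply (a : ℕ+ × ℚ) :
    fractionEquiv a = (a.1 * a.2.pnatDen, a.1 * a.2.num) :=
  rfl

lemma fractionEquiv_num_div_den (a : ℕ+ × ℚ) :
    ((fractionEquiv a).2 / (fractionEquiv a).1 : ℚ) = a.2 := by
  obtain ⟨d, r⟩ := a
  push_cast [fractionEquiv_apply, Rat.coe_pnatDen]
  rw [mul_div_mul_left _ _ (by positivity), Rat.num_div_den]

lemma tsum_fractions_eq_smul_tsum_rat {𝕜 E : Type*} [NormedField 𝕜] [NormedAddCommGroup E]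
    [NormedSpace 𝕜 E] [CompleteSpace E] {w : ℕ+ → 𝕜} (hw_mul : ∀ d q, w (d * q) = w d * w q)
    (hw : Summable w) {g : ℚ → E}
    (hg : Summable fun a : ℕ+ × ℤ => w a.1 • g (a.2 / a.1)) :
    ∑' a : ℕ+ × ℤ, w a.1 • g (a.2 / a.1) =
      (∑' d, w d) • ∑' r : ℚ, w r.pnatDen • g r := by
  have h_term (a : ℕ+ × ℚ) :
      w (fractionEquiv a).1 • g ((fractionEquiv a).2 / (fractionEquiv a).1) =
        w a.1 • w a.2.pnatDen • g a.2 := by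
    rw [fractionEquiv_num_div_den, fractionEquiv_apply, hw_mul, mul_smul]
  rw [← fractionEquiv.summable_iff] at hg
  simp only [Function.comp_def, h_term] at hg
  rw [← fractionEquiv.tsum_eq]
  simp only [h_term]
  rw [hg.tsum_prod]
  simp only [tsum_const_smul'']
  exact hw.tsum_smul_const _

/-- The index set `RatIdx` of reduced fractions, identified with `ℚ`. -/
@[simps]
def ratIdxEquiv : ℚ ≃ RatIdx where
  toFun r := ⟨(r.num, r.den), Int.natCast_pos.mpr r.pos, r.reduced⟩
  invFun pq := pq.1.1 / pq.1.2
  left_inv r := by simp [Rat.num_div_den]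
  right_inv pq := Subtype.ext <| Prod.ext
    (Rat.num_div_eq_of_coprime pq.2.1 pq.2.2) (Rat.den_div_eq_of_coprime pq.2.1 pq.2.2)

end Fractions

section Decay

lemma one_add_sq_le_mul_one_add_add_div_sq (x t : ℝ) {y : ℝ} (hy : y ≠ 0) :
    1 + t ^ 2 ≤ (1 + 2 * x ^ 2 + 2 * y ^ 2) * (1 + ((x + t) / y) ^ 2) := by
  obtain ⟨v, hv⟩ : ∃ v, v = (x + t) / y := ⟨_, rfl⟩
  have ht : t = v * y - x := by rw [hv]; field_simp; ring
  rw [← hv, ht]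
  nlinarith [sq_nonneg (v * y + x), sq_nonneg v, sq_nonneg (v * x), sq_nonneg y]

lemma summable_int_one_add_sq_rpow_neg {s : ℝ} (hs : 1 / 2 < s) :
    Summable fun p : ℤ => (1 + (p : ℝ) ^ 2) ^ (-s) := by
  have h_summable : Summable fun p : ℤ => |(p : ℝ)| ^ (-(2 * s)) :=
    Real.summable_abs_int_rpow (by linarith)
  refine h_summable.of_norm_bounded_eventually ?_
  filter_upwards [(Set.finite_singleton (0 : ℤ)).compl_mem_cofinite] with p hp
  have hp_ne : (p : ℝ) ≠ 0 := Int.cast_ne_zero.mpr hp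
  rw [Real.norm_of_nonneg (by positivity), neg_mul_eq_mul_neg, Real.rpow_mul (abs_nonneg _),
    Real.rpow_two, sq_abs]
  exact Real.rpow_le_rpow_of_nonpos (by positivity) (by linarith) (by linarith)

-- `q² + p²` dominates both `q²` and `1 + p²`, hence also `(q²)^(1/4) * (1 + p²)^(3/4)`.
lemma rpow_mul_rpow_le_sq_add_sq {q : ℝ} (hq : 1 ≤ q) (p : ℝ) :
    q ^ (1 / 2 : ℝ) * (1 + p ^ 2) ^ (3 / 4 : ℝ) ≤ q ^ 2 + p ^ 2 :=
  have hq_pos : 0 < q := one_pos.trans_le hq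
  calc q ^ (1 / 2 : ℝ) * (1 + p ^ 2) ^ (3 / 4 : ℝ)
      = (q ^ 2) ^ (1 / 4 : ℝ) * (1 + p ^ 2) ^ (3 / 4 : ℝ) := by
        rw [← Real.rpow_natCast_mul hq_pos.le]
        norm_num
    _ ≤ (q ^ 2 + p ^ 2) ^ (1 / 4 : ℝ) * (q ^ 2 + p ^ 2) ^ (3 / 4 : ℝ) := by
        gcongr
        · exact le_add_of_nonneg_right (sq_nonneg _)
        · exact one_le_pow₀ hq
    _ = q ^ 2 + p ^ 2 := by
        rw [← Real.rpow_add (by positivity)]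
        norm_num

lemma inv_pow_mul_inv_one_add_div_sq_le {k : ℕ} (hk : 2 < k) {q : ℝ} (hq : 1 ≤ q) (p : ℝ) :
    (q ^ k)⁻¹ * (1 + (p / q) ^ 2)⁻¹ ≤
      q ^ (-(3 / 2) : ℝ) * (1 + p ^ 2) ^ (-(3 / 4) : ℝ) := by
  have hq_pos : 0 < q := one_pos.trans_le hq
  rw [Real.rpow_neg hq_pos.le, Real.rpow_neg (by positivity), ← mul_inv, ← mul_inv]
  refine inv_anti₀ (by positivity) ?_
  calc q ^ (3 / 2 : ℝ) * (1 + p ^ 2) ^ (3 / 4 : ℝ)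
      = q * (q ^ (1 / 2 : ℝ) * (1 + p ^ 2) ^ (3 / 4 : ℝ)) := by
        rw [← mul_assoc, ← Real.rpow_one_add' hq_pos.le (by norm_num)]
        norm_num
    _ ≤ q * (q ^ 2 + p ^ 2) := by gcongr; exact rpow_mul_rpow_le_sq_add_sq hq p
    _ = q ^ 3 * (1 + (p / q) ^ 2) := by field_simp
    _ ≤ q ^ k * (1 + (p / q) ^ 2) := by
        gcongr
        exact hk

lemma summable_inv_pow_mul_inv_one_add_div_sq {k : ℕ} (hk : 2 < k) :
    Summable fun a : ℕ+ × ℤ => ((a.1 : ℝ) ^ k)⁻¹ * (1 + ((a.2 : ℝ) / a.1) ^ 2)⁻¹ := by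
  have h_den : Summable fun q : ℕ+ => (q : ℝ) ^ (-(3 / 2) : ℝ) :=
    (Real.summable_nat_rpow.mpr (by norm_num)).comp_injective PNat.coe_injective
  have h_num := summable_int_one_add_sq_rpow_neg (s := 3 / 4) (by norm_num)
  refine .of_nonneg_of_le (fun a => by positivity)
    (fun a => inv_pow_mul_inv_one_add_div_sq_le hk (Nat.one_le_cast.mpr a.1.2) a.2) ?_
  exact h_den.mul_of_nonneg h_num (fun q => by positivity) (fun p => by positivity)

variable {E : Type*} [NormedAddCommGroup E] {f : ℝ → E} {C : ℝ}

lemma integrable_of_norm_le_inv_one_add_sq (hf : AEStronglyMeasurable f)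
    (hfC : ∀ u, ‖f u‖ ≤ C * (1 + u ^ 2)⁻¹) : Integrable f :=
  (integrable_inv_one_add_sq.const_mul C).mono' hf (.of_forall hfC)

lemma summable_norm_fractions_of_norm_le_inv_one_add_sq
    (hfC : ∀ u, ‖f u‖ ≤ C * (1 + u ^ 2)⁻¹) {k : ℕ} (hk : 2 < k) (x : ℝ) {y : ℝ} (hy : y ≠ 0) :
    Summable fun a : ℕ+ × ℤ => ((a.1 : ℝ) ^ k)⁻¹ * ‖f ((x + a.2 / a.1) / y)‖ := by
  have hC : 0 ≤ C := by simpa using (norm_nonneg _).trans (hfC 0)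
  let K := 1 + 2 * x ^ 2 + 2 * y ^ 2
  have h_kernel (t : ℝ) : ‖f ((x + t) / y)‖ ≤ C * (K * (1 + t ^ 2)⁻¹) := by
    refine (hfC _).trans (mul_le_mul_of_nonneg_left ?_ hC)
    rw [← div_eq_mul_inv, le_div_iff₀ (by positivity), inv_mul_le_iff₀' (by positivity)]
    exact one_add_sq_le_mul_one_add_add_div_sq x t hy
  refine .of_nonneg_of_le (fun a => by positivity) (fun a => ?_)
    ((summable_inv_pow_mul_inv_one_add_div_sq hk).mul_left (C * K))
  rw [mul_left_comm, mul_assoc C]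
  gcongr
  exact h_kernel _

end Decay

section ReducedFractions

open scoped FourierTransform

lemma zetaR_natCast (k : ℕ) : zetaR k = ∑' q : ℕ+, ((q : ℝ) ^ k)⁻¹ := by
  rw [zetaR, tsum_pnat_eq_tsum_succ (f := fun q => ((q : ℝ) ^ k)⁻¹)]
  simp [rpow_natCast]

lemma summable_pnat_pow_inv {k : ℕ} (hk : 1 < k) : Summable fun q : ℕ+ => ((q : ℝ) ^ k)⁻¹ :=
  (summable_nat_pow_inv.mpr hk).comp_injective PNat.coe_injective

lemma tsum_pnat_ite_dvd {M : Type*} [AddCommMonoid M] [TopologicalSpace M] {n : ℤ} (hn : n ≠ 0)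
    (g : ℕ → M) :
    ∑' q : ℕ+, (if (q : ℤ) ∣ n then g q else 0) = ∑ d ∈ n.natAbs.divisors, g d := by
  have h_mem (d : ℕ) : d ∈ n.natAbs.divisors ↔ (d : ℤ) ∣ n := by
    simp [Int.natCast_dvd, hn]
  have h_support :
      (Function.support fun d : ℕ => if (d : ℤ) ∣ n then g d else 0) ⊆ Set.range PNat.val := by
    intro d hd
    have h_dvd : (d : ℤ) ∣ n := by
      by_contra h
      simp [h] at hd
    exact ⟨⟨d, Nat.pos_of_mem_divisors ((h_mem d).mpr h_dvd)⟩, rfl⟩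
  refine (PNat.coe_injective.tsum_eq h_support).trans ?_
  rw [tsum_eq_sum fun d hd => if_neg ((h_mem d).not.mp hd)]
  exact Finset.sum_congr rfl fun d hd => if_pos ((h_mem d).mp hd)

lemma tsum_pnat_ite_dvd_sq_inv (n : ℤ) :
    ∑' q : ℕ+, (if (q : ℤ) ∣ n then ((q : ℝ) ^ 2)⁻¹ else 0) = sigmaNeg2 n := by
  rw [sigmaNeg2]
  split_ifs with hn
  · simpa [hn] using (zetaR_natCast 2).symm
  · simpa [zpow_neg] using tsum_pnat_ite_dvd hn fun q => ((q : ℝ) ^ 2)⁻¹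

variable {E : Type*} [NormedAddCommGroup E] [NormedSpace ℂ E]

/-- The summand `q⁻³ f((x + p/q)/y)` attached to an arbitrary function `f`, with values in a complex
vector space; `PhiTerm` is the case `f = hfun`. -/
noncomputable def fractionTerm (f : ℝ → E) (x y : ℝ) (pq : RatIdx) : E :=
  (pq.1.2 : ℂ) ^ (-3 : ℤ) • f ((x + pq.1.1 / pq.1.2) / y)

lemma fractionTerm_ofReal_hfun (x y : ℝ) (pq : RatIdx) :
    fractionTerm (fun u => (hfun u : ℂ)) x y pq = PhiTerm x y pq := by
  simp [fractionTerm, PhiTerm]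

variable {f : ℝ → E} {C : ℝ}

lemma fractionTerm_ratIdxEquiv (x y : ℝ) (r : ℚ) :
    fractionTerm f x y (ratIdxEquiv r) = ((r.pnatDen : ℂ) ^ 3)⁻¹ • f ((x + r) / y) := by
  simp [fractionTerm, Rat.coe_pnatDen, zpow_neg, Rat.cast_def, zpow_ofNat]

lemma summable_norm_fractionTerm (hfC : ∀ u, ‖f u‖ ≤ C * (1 + u ^ 2)⁻¹) (x : ℝ) {y : ℝ}
    (hy : y ≠ 0) : Summable fun pq : RatIdx => ‖fractionTerm f x y pq‖ := by
  have h := (summable_norm_fractions_of_norm_le_inv_one_add_sq hfC (k := 3) (by norm_num) x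
    hy).comp_injective (fractionEquiv.injective.comp (Prod.mk_right_injective 1))
  rw [← ratIdxEquiv.summable_iff]
  simpa [Function.comp_def, fractionTerm_ratIdxEquiv, norm_smul, Rat.coe_pnatDen, Rat.cast_def]
    using h

lemma intervalIntegral_fourierChar_smul_tsum_pow_three_inv_smul_fractions
    (hf : Integrable f) (n : ℤ) {y : ℝ} (hy : 0 < y) :
    ∫ x in (0 : ℝ)..1, 𝐞 (-(n * x)) •
        ∑' a : ℕ+ × ℤ, ((a.1 : ℂ) ^ 3)⁻¹ • f ((x + a.2 / a.1) / y) =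
      ((sigmaNeg2 n * y : ℝ) : ℂ) • 𝓕 f (n * y) := by
  have h_weight (q : ℕ+) : ((q : ℂ) ^ 3)⁻¹ * q = ((q : ℂ) ^ 2)⁻¹ := by
    field_simp
  have h_summable : Summable fun q : ℕ+ => ‖((q : ℂ) ^ 3)⁻¹‖ * q := by
    have h_norm (q : ℕ+) : ‖((q : ℂ) ^ 3)⁻¹‖ * q = ((q : ℝ) ^ 2)⁻¹ := by
      simpa using congrArg norm (h_weight q)
    simpa only [h_norm] using summable_pnat_pow_inv one_lt_two
  have h_sigma :
      ∑' q : ℕ+, (if (q : ℤ) ∣ n then ((q : ℂ) ^ 2)⁻¹ else 0) = sigmaNeg2 n := by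
    rw [← tsum_pnat_ite_dvd_sq_inv, Complex.ofReal_tsum]
    exact tsum_congr fun q => by split_ifs <;> simp
  have h := intervalIntegral_fourierChar_smul_tsum_fractions h_summable (hf.comp_div hy.ne') n
  simp only [h_weight] at h
  rw [h, h_sigma, fourier_comp_div f hy.ne', abs_of_pos hy, ← Complex.coe_smul, smul_smul,
    Complex.ofReal_mul]

variable [CompleteSpace E]

lemma zetaR_smul_tsum_fractionTerm (hfC : ∀ u, ‖f u‖ ≤ C * (1 + u ^ 2)⁻¹) (x : ℝ) {y : ℝ}
    (hy : y ≠ 0) :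
    (zetaR 3 : ℂ) • ∑' pq : RatIdx, fractionTerm f x y pq =
      ∑' a : ℕ+ × ℤ, ((a.1 : ℂ) ^ 3)⁻¹ • f ((x + a.2 / a.1) / y) := by
  have h_weight : Summable fun q : ℕ+ => ((q : ℂ) ^ 3)⁻¹ := by
    simpa using Complex.summable_ofReal.mpr (summable_pnat_pow_inv (k := 3) (by norm_num))
  have h_summable :
      Summable fun a : ℕ+ × ℤ => ((a.1 : ℂ) ^ 3)⁻¹ • f ((x + (a.2 / a.1 : ℚ)) / y) := by
    refine .of_norm ?_
    simpa [norm_smul] using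
      summable_norm_fractions_of_norm_le_inv_one_add_sq hfC (k := 3) (by norm_num) x hy
  have h_zeta : (zetaR 3 : ℂ) = ∑' q : ℕ+, ((q : ℂ) ^ 3)⁻¹ := by
    simpa [Complex.ofReal_tsum] using congrArg Complex.ofReal (zetaR_natCast 3)
  rw [h_zeta, ← ratIdxEquiv.tsum_eq]
  simp only [fractionTerm_ratIdxEquiv]
  have h := tsum_fractions_eq_smul_tsum_rat (w := fun q : ℕ+ => ((q : ℂ) ^ 3)⁻¹)
    (fun d q => by push_cast; rw [mul_pow, mul_inv]) h_weight (g := fun r => f ((x + r) / y))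
    h_summable
  push_cast at h
  exact h.symm

theorem phi_fourier_coefficients_general (hf : AEStronglyMeasurable f)
    (hfC : ∀ u, ‖f u‖ ≤ C * (1 + u ^ 2)⁻¹) :
    (∀ x y : ℝ, 0 < y → Summable fun pq : RatIdx => ‖fractionTerm f x y pq‖) ∧
    ∀ (n : ℤ) (y : ℝ), 0 < y →
      ∫ x in (0 : ℝ)..1, 𝐞 (-(n * x)) •
          ((4 * zetaR 3 ^ 2 : ℝ) : ℂ) • ∑' pq : RatIdx, fractionTerm f x y pq =
        ((4 * zetaR 3 * sigmaNeg2 n * y : ℝ) : ℂ) • 𝓕 f (n * y) := by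
  refine ⟨fun x y hy => summable_norm_fractionTerm hfC x hy.ne', fun n y hy => ?_⟩
  have h_factor : ((4 * zetaR 3 ^ 2 : ℝ) : ℂ) = ((4 * zetaR 3 : ℝ) : ℂ) * zetaR 3 := by
    push_cast
    ring
  simp only [h_factor, mul_smul, zetaR_smul_tsum_fractionTerm hfC _ hy.ne',
    smul_comm _ ((4 * zetaR 3 : ℝ) : ℂ), intervalIntegral.integral_smul]
  rw [intervalIntegral_fourierChar_smul_tsum_pow_three_inv_smul_fractions
    (integrable_of_norm_le_inv_one_add_sq hf hfC) n hy, smul_smul, ← Complex.ofReal_mul,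
    ← mul_assoc]

lemma fourierChar_neg_mul (w x : ℝ) :
    (𝐞 (-(w * x)) : ℂ) = Complex.exp (-2 * π * Complex.I * w * x) := by
  rw [Real.fourierChar_apply]
  push_cast
  ring_nf

lemma hhat_eq_fourier (r : ℝ) : hhat r = 𝓕 (fun u => (hfun u : ℂ)) r := by
  simp_rw [hhat, Real.fourier_real_eq, Circle.smul_def, smul_eq_mul, mul_comm _ r,
    fourierChar_neg_mul, mul_comm]

end ReducedFractions

/-- the sum defining `Φ` converges absolutely, and the `n`-th Fourier
coefficient of `Φ(·+iy)` equals `4ζ(3)σ₋₂(|n|)·y·ĥ(ny)`. -/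
theorem phi_fourier_coefficients :
    (∀ (x y : ℝ), 0 < y → Summable (fun pq : RatIdx => |PhiTerm x y pq|)) ∧
    (∀ (n : ℤ) (y : ℝ), 0 < y →
      (∫ x in (0:ℝ)..1,
          ((4 * zetaR 3 ^ 2 * ∑' pq : RatIdx, PhiTerm x y pq : ℝ) : ℂ) *
            Complex.exp (-2 * π * Complex.I * n * x)) =
        ((4 * zetaR 3 * sigmaNeg2 n * y : ℝ) : ℂ) * hhat ((n : ℝ) * y)) := by
  have h := phi_fourier_coefficients_general (f := fun u => (hfun u : ℂ))
    (Complex.continuous_ofReal.comp continuous_hfun).aestronglyMeasurable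
    (fun u => (Complex.norm_real _).trans_le (abs_hfun_le u))
  simpa only [fractionTerm_ofReal_hfun, Complex.norm_real, Real.norm_eq_abs, Circle.smul_def,
    smul_eq_mul, ← Complex.ofReal_intCast, ← fourierChar_neg_mul, ← hhat_eq_fourier,
    ← Complex.ofReal_tsum, ← Complex.ofReal_mul, mul_comm (Real.fourierChar _ : ℂ)] using h
end
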